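/- arXiv:2403.07096 — 2 statements merged into one kernel-verified Lean document; each statement's English description precedes it below -/
import Mathlib

section
/- There is a positive constant C depending only on the dimension n such that for every u : ℝⁿ → ℝ of class C² with compact support and every i ∈ {1, …, n}, there exists a countable family 𝒫 of measurable subsets of ℝⁿ, each of finite positive Lebesgue measure, satisfying: (i) for every x ∈ ℝⁿ, |∂u/∂x_i(x)|² ≤ C · Σ_{P∈𝒫} (⨍_P |∂²u/∂x_i²(t)| dt) · (⨍_P |u(t)| dt) · χ_P(x); and (ii) Σ_{P∈𝒫} χ_P(x) ≤ 5 for every x ∈ ℝⁿ. -/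
open MeasureTheory ENNReal Set

/-- The `j`-th iterated partial derivative of `u : ℝⁿ → ℝ` in the `i`-th
coordinate direction. -/
noncomputable def pderivIter (n : ℕ) (i : Fin n) (j : ℕ)
    (u : (Fin n → ℝ) → ℝ) : (Fin n → ℝ) → ℝ :=
  (fun v x => fderiv ℝ v x (Pi.single i 1))^[j] u

/-!
On a line in direction `i`, the set where the 1-jet of the restriction `w` of `u` is nonzero is
tiled by half-open intervals `I` with `|I|² ∫_I |w''| = ∫_I |w|`: starting from a given point, the
right end of `I` is the first one at which this balance is reached. Interpolation gives
`|I|² |w'| ≤ 18 ∫_I |w| + |I|² ∫_I |w''|` on `I`, so by the balance `|w'|²` is at most a constant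
times the product of the averages of `|w''|` and `|w|` over `I`.

The right end depends measurably on the line. Grouping the lines along which `|I|` and the average
of `|w|` are comparable therefore turns the intervals into disjoint subsets of `ℝⁿ` with the same
estimate. Pieces that are null sets have to be given up; continuity of `∂u/∂x_i` makes it possible
to distribute their points among the other pieces.
-/

open Filter
open scoped Function Topology

section Interval

variable {v w : ℝ → ℝ} {a b c d t x y : ℝ}

theorem integral_abs_mono_interval (hv : Continuous v) (hac : a ≤ c) (hcd : c ≤ d) (hdb : d ≤ b) :
    ∫ s in c..d, |v s| ≤ ∫ s in a..b, |v s| :=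
  intervalIntegral.integral_mono_interval hac hcd hdb (.of_forall fun _ => abs_nonneg _)
    (hv.abs.intervalIntegrable _ _)

theorem abs_sub_le_integral_abs_deriv (hv : ContDiff ℝ 1 v) (hx : x ∈ Icc a b)
    (hy : y ∈ Icc a b) : |v x - v y| ≤ ∫ s in a..b, |deriv v s| := by
  wlog hyx : y ≤ x generalizing x y
  · rw [abs_sub_comm]
    exact this hy hx (le_of_not_ge hyx)
  have hv' : Continuous (deriv v) := hv.continuous_deriv le_rfl
  rw [← intervalIntegral.integral_deriv_eq_sub
    (fun s _ => (hv.differentiable one_ne_zero).differentiableAt) (hv'.intervalIntegrable _ _)]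
  exact (intervalIntegral.abs_integral_le_integral_abs hyx).trans
    (integral_abs_mono_interval hv' hy.1 hyx hx.2)

theorem exists_mul_sub_eq_integral (hv : Continuous v) (hab : a < b) :
    ∃ x ∈ Icc a b, v x * (b - a) = ∫ s in a..b, v s := by
  obtain ⟨x, hx, hvx⟩ := exists_eq_interval_average hab.ne hv.continuousOn
  rw [uIoo_of_le hab.le] at hx
  refine ⟨x, Ioo_subset_Icc_self hx, ?_⟩
  have : b - a ≠ 0 := (sub_pos.2 hab).ne'
  rw [hvx, interval_average_eq_div]
  field_simp

theorem exists_abs_deriv_mul_sq_le_integral (hw : ContDiff ℝ 1 w) (hab : a < b) :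
    ∃ ξ ∈ Icc a b, |deriv w ξ| * (b - a) ^ 2 ≤ 18 * ∫ s in a..b, |w s| := by
  -- Points `p`, `q` of the outer thirds at which `|w|` equals its average have a difference
  -- quotient controlled by `∫ |w|`.
  obtain ⟨p, hp, hwp⟩ := exists_mul_sub_eq_integral hw.continuous.abs
    (show a < a + (b - a) / 3 by linarith)
  obtain ⟨q, hq, hwq⟩ := exists_mul_sub_eq_integral hw.continuous.abs
    (show b - (b - a) / 3 < b by linarith)
  have hpq : (b - a) / 3 ≤ q - p := by linarith [hp.2, hq.1]
  obtain ⟨ξ, hξ, hslope⟩ := exists_deriv_eq_slope w (show p < q by linarith)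
    hw.continuous.continuousOn (hw.differentiable one_ne_zero).differentiableOn
  refine ⟨ξ, ⟨by linarith [hp.1, hξ.1], by linarith [hq.2, hξ.2]⟩, ?_⟩
  have hp_le : |w p| * ((b - a) / 3) ≤ ∫ s in a..b, |w s| := by
    have := integral_abs_mono_interval hw.continuous le_rfl
      (show a ≤ a + (b - a) / 3 by linarith) (show a + (b - a) / 3 ≤ b by linarith)
    linarith
  have hq_le : |w q| * ((b - a) / 3) ≤ ∫ s in a..b, |w s| := by
    have := integral_abs_mono_interval hw.continuous (show a ≤ b - (b - a) / 3 by linarith)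
      (show b - (b - a) / 3 ≤ b by linarith) le_rfl
    linarith
  have hξ_le : |deriv w ξ| * ((b - a) / 3) ≤ |w q| + |w p| :=
    calc |deriv w ξ| * ((b - a) / 3) ≤ |deriv w ξ| * (q - p) := by gcongr
      _ = |w q - w p| := by
        have hqp : 0 < q - p := by linarith
        rw [hslope, abs_div, abs_of_pos hqp, div_mul_cancel₀ _ hqp.ne']
      _ ≤ |w q| + |w p| := abs_sub _ _
  nlinarith [mul_le_mul_of_nonneg_right hξ_le (show 0 ≤ (b - a) / 3 by linarith)]

theorem abs_deriv_mul_sq_le_integral_add (hw : ContDiff ℝ 2 w) (hab : a < b) (ht : t ∈ Icc a b) :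
    |deriv w t| * (b - a) ^ 2 ≤
      18 * (∫ s in a..b, |w s|) + (b - a) ^ 2 * ∫ s in a..b, |deriv (deriv w) s| := by
  obtain ⟨ξ, hξ, hξ_le⟩ := exists_abs_deriv_mul_sq_le_integral (hw.of_le one_le_two) hab
  have ht_le : |deriv w t| ≤ |deriv w ξ| + ∫ s in a..b, |deriv (deriv w) s| := by
    have := abs_sub_le_integral_abs_deriv (ContDiff.deriv' hw) ht hξ
    linarith [abs_sub_abs_le_abs_sub (deriv w t) (deriv w ξ)]
  nlinarith [mul_le_mul_of_nonneg_right ht_le (sq_nonneg (b - a))]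

end Interval

section Stopping

variable {w : ℝ → ℝ} {a b t : ℝ}

theorem continuous_intervalIntegral_of_continuous {X : Type*} [TopologicalSpace X] {f : X → ℝ → ℝ}
    (hf : Continuous fun p : X × ℝ => f p.1 p.2) {a b : X → ℝ} (ha : Continuous a)
    (hb : Continuous b) : Continuous fun x => ∫ t in a x..b x, f x t := by
  have hslice : ∀ x, Continuous (f x) := fun x => by fun_prop
  have hsplit : (fun x => ∫ t in a x..b x, f x t) =
      fun x => (∫ t in (0 : ℝ)..b x, f x t) - ∫ t in (0 : ℝ)..a x, f x t :=
    funext fun x => (intervalIntegral.integral_interval_sub_left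
      ((hslice x).intervalIntegrable _ _) ((hslice x).intervalIntegrable _ _)).symm
  rw [hsplit]
  exact (intervalIntegral.continuous_parametric_intervalIntegral_of_continuous hf hb).sub
    (intervalIntegral.continuous_parametric_intervalIntegral_of_continuous hf ha)

/-- The points where the 1-jet of `w` is nonzero; this is the set to be tiled. Unlike the
usual support it is not closed up, since no tiling interval crosses the end of a component. -/
def jetSupport (w : ℝ → ℝ) : Set ℝ := {t | w t ≠ 0 ∨ deriv w t ≠ 0}

/-- The defect in the balance `(b - a)² ∫ₐᵇ |w''| = ∫ₐᵇ |w|` that the tiling intervals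
`[a, b)` satisfy. -/
noncomputable def excess (w : ℝ → ℝ) (a b : ℝ) : ℝ :=
  (b - a) ^ 2 * (∫ t in a..b, |deriv (deriv w) t|) - ∫ t in a..b, |w t|

theorem continuous_deriv_deriv (hw : ContDiff ℝ 2 w) : Continuous (deriv (deriv w)) :=
  (ContDiff.deriv' (n := 1) hw).continuous_deriv le_rfl

theorem continuous_excess {X : Type*} [TopologicalSpace X] {w : X → ℝ → ℝ}
    (hw : Continuous fun p : X × ℝ => w p.1 p.2)
    (hw2 : Continuous fun p : X × ℝ => deriv (deriv (w p.1)) p.2) {a b : X → ℝ}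
    (ha : Continuous a) (hb : Continuous b) : Continuous fun x => excess (w x) (a x) (b x) :=
  (((hb.sub ha).pow 2).mul (continuous_intervalIntegral_of_continuous hw2.abs ha hb)).sub
    (continuous_intervalIntegral_of_continuous hw.abs ha hb)

theorem continuous_excess_right (hw : ContDiff ℝ 2 w) (a : ℝ) : Continuous (excess w a) :=
  continuous_excess (hw.continuous.comp continuous_snd)
    ((continuous_deriv_deriv hw).comp continuous_snd) continuous_const continuous_id

theorem excess_pos (hw : ContDiff ℝ 2 w) (ha : a ∈ jetSupport w) (hb : b ∉ jetSupport w)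
    (hab : a < b) : 0 < excess w a b := by
  obtain ⟨hwb, hwb'⟩ : w b = 0 ∧ deriv w b = 0 := by simpa [jetSupport] using hb
  have hb_mem : b ∈ Icc a b := right_mem_Icc.2 hab.le
  set M := ∫ s in a..b, |deriv (deriv w) s|
  have hderiv : ∀ s ∈ Icc a b, |deriv w s| ≤ M := fun s hs => by
    simpa [hwb'] using abs_sub_le_integral_abs_deriv (ContDiff.deriv' hw) hs hb_mem
  have hval : ∀ s ∈ Icc a b, |w s| ≤ M * (b - a) := fun s hs =>
    calc |w s| ≤ ∫ r in a..b, |deriv w r| := by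
          simpa [hwb] using abs_sub_le_integral_abs_deriv (hw.of_le one_le_two) hs hb_mem
      _ ≤ ∫ _ in a..b, M := intervalIntegral.integral_mono_on hab.le
          ((hw.continuous_deriv one_le_two).abs.intervalIntegrable _ _)
          intervalIntegrable_const hderiv
      _ = M * (b - a) := by simp [mul_comm]
  have hM : 0 < M := by
    by_contra! hM
    have ha_mem : a ∈ Icc a b := left_mem_Icc.2 hab.le
    have hwa : |w a| ≤ 0 :=
      (hval a ha_mem).trans (mul_nonpos_of_nonpos_of_nonneg hM (sub_nonneg.2 hab.le))
    exact ha.elim (· (abs_nonpos_iff.1 hwa))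
      (· (abs_nonpos_iff.1 ((hderiv a ha_mem).trans hM)))
  have hlt : ∫ s in a..b, |w s| < ∫ _ in a..b, M * (b - a) :=
    intervalIntegral.integral_lt_integral_of_continuousOn_of_le_of_exists_lt hab
      hw.continuous.abs.continuousOn continuousOn_const
      (fun s hs => hval s (Ioc_subset_Icc_self hs))
      ⟨b, hb_mem, by simpa [hwb] using mul_pos hM (sub_pos.2 hab)⟩
  rw [intervalIntegral.integral_const, smul_eq_mul] at hlt
  rw [excess]
  linarith

theorem eventually_excess_neg_of_deriv_ne_zero (hw : ContDiff ℝ 2 w) (ht : deriv w t ≠ 0) :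
    ∀ᶠ p : ℝ × ℝ in 𝓝 (t, t), p.1 < p.2 → excess w p.1 p.2 < 0 := by
  have hw1 : Continuous (deriv w) := hw.continuous_deriv one_le_two
  have hw2 : Continuous (deriv (deriv w)) := continuous_deriv_deriv hw
  have hcont : Continuous fun p : ℝ × ℝ =>
      |deriv w p.1| - 19 * ∫ s in p.1..p.2, |deriv (deriv w) s| :=
    (hw1.comp continuous_fst).abs.sub (continuous_const.mul
      (continuous_intervalIntegral_of_continuous (hw2.comp continuous_snd).abs
        continuous_fst continuous_snd))
  filter_upwards [hcont.continuousAt.eventually_const_lt (u := 0) (by simpa using ht)] with p hp hlt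
  have hsq : 0 < (p.2 - p.1) ^ 2 := pow_pos (sub_pos.2 hlt) 2
  have := abs_deriv_mul_sq_le_integral_add hw hlt (left_mem_Icc.2 hlt.le)
  rw [excess]
  nlinarith [mul_pos hp hsq]

theorem eventually_excess_neg_of_ne_zero (hw : ContDiff ℝ 2 w) (ht : w t ≠ 0) :
    ∀ᶠ p : ℝ × ℝ in 𝓝 (t, t), p.1 < p.2 → excess w p.1 p.2 < 0 := by
  have hw0 : Continuous w := hw.continuous
  have hw1 : Continuous (deriv w) := hw.continuous_deriv one_le_two
  have hw2 : Continuous (deriv (deriv w)) := continuous_deriv_deriv hw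
  have hcont : Continuous fun p : ℝ × ℝ => |w p.1| - (∫ s in p.1..p.2, |deriv w s|) -
      (p.2 - p.1) * ∫ s in p.1..p.2, |deriv (deriv w) s| :=
    ((hw0.comp continuous_fst).abs.sub
      (continuous_intervalIntegral_of_continuous (hw1.comp continuous_snd).abs
        continuous_fst continuous_snd)).sub
      ((continuous_snd.sub continuous_fst).mul
        (continuous_intervalIntegral_of_continuous (hw2.comp continuous_snd).abs
          continuous_fst continuous_snd))
  filter_upwards [hcont.continuousAt.eventually_const_lt (u := 0) (by simpa using ht)] with p hp hlt
  obtain ⟨x, hx, hwx⟩ := exists_mul_sub_eq_integral hw0.abs hlt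
  have hosc := abs_sub_le_integral_abs_deriv (hw.of_le one_le_two) (left_mem_Icc.2 hlt.le) hx
  have hlarge : 0 < |w x| - (p.2 - p.1) * ∫ s in p.1..p.2, |deriv (deriv w) s| := by
    linarith [abs_sub_abs_le_abs_sub (w p.1) (w x)]
  rw [excess, ← hwx]
  nlinarith [mul_pos hlarge (sub_pos.2 hlt)]

theorem exists_forall_excess_neg (hw : ContDiff ℝ 2 w) (ht : t ∈ jetSupport w) :
    ∃ δ > 0, ∀ a c, t - δ < a → a < c → c < t + δ → excess w a c < 0 := by
  have hev := ht.elim (eventually_excess_neg_of_ne_zero hw)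
    (eventually_excess_neg_of_deriv_ne_zero hw)
  obtain ⟨δ, hδ, hball⟩ := Metric.eventually_nhds_iff_ball.1 hev
  refine ⟨δ, hδ, fun a c ha hac hc => hball (a, c) ?_ hac⟩
  rw [← ball_prod_same, Real.ball_eq_Ioo]
  exact ⟨⟨ha, hac.trans hc⟩, ha.trans hac, hc⟩

theorem integral_abs_pos_of_mem_jetSupport (hw : ContDiff ℝ 2 w) (ha : a ∈ jetSupport w)
    (hab : a < b) : 0 < ∫ s in a..b, |w s| := by
  obtain ⟨δ, hδ, hneg⟩ := exists_forall_excess_neg hw ha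
  obtain ⟨c, hac, hc⟩ := exists_between (lt_min hab (lt_add_of_pos_right a hδ))
  obtain ⟨hcb, hcδ⟩ := lt_min_iff.1 hc
  have hexc := hneg a c (sub_lt_self a hδ) hac hcδ
  have hnonneg : 0 ≤ (c - a) ^ 2 * ∫ s in a..c, |deriv (deriv w) s| :=
    mul_nonneg (sq_nonneg _) (intervalIntegral.integral_nonneg hac.le fun _ _ => abs_nonneg _)
  rw [excess] at hexc
  linarith [integral_abs_mono_interval hw.continuous le_rfl hac.le hcb.le]

open Classical in
/-- The right end of the tiling interval that starts at `a`: the first point where the excess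
becomes positive. The interval is empty if `a` lies outside the jet support. -/
noncomputable def stoppingPoint (w : ℝ → ℝ) (a : ℝ) : ℝ :=
  if a ∈ jetSupport w then sInf {c | a < c ∧ 0 < excess w a c} else a

theorem stoppingPoint_of_mem (ha : a ∈ jetSupport w) :
    stoppingPoint w a = sInf {c | a < c ∧ 0 < excess w a c} := if_pos ha

theorem stoppingPoint_of_notMem (ha : a ∉ jetSupport w) : stoppingPoint w a = a := if_neg ha

theorem bddBelow_excess_pos : BddBelow {c | a < c ∧ 0 < excess w a c} :=
  ⟨a, fun _ hc => hc.1.le⟩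

theorem exists_gt_notMem_jetSupport (hw : HasCompactSupport w) (a : ℝ) :
    ∃ b > a, b ∉ jetSupport w := by
  obtain ⟨b, hab, hb⟩ : ∃ b > a, b ∉ tsupport w := by
    obtain ⟨B, hB⟩ := hw.isCompact.bddAbove
    exact ⟨max a B + 1, by linarith [le_max_left a B],
      fun h => by linarith [hB h, le_max_right a B]⟩
  refine ⟨b, hab, not_or.2 ⟨not_not.2 (image_eq_zero_of_notMem_tsupport hb), not_not.2 ?_⟩⟩
  exact Function.notMem_support.1 fun h => hb (support_deriv_subset h)

theorem stoppingPoint_le (hw : ContDiff ℝ 2 w) (hab : a < b) (hb : b ∉ jetSupport w) :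
    stoppingPoint w a ≤ b := by
  by_cases ha : a ∈ jetSupport w
  · rw [stoppingPoint_of_mem ha]
    exact csInf_le bddBelow_excess_pos ⟨hab, excess_pos hw ha hb hab⟩
  · rw [stoppingPoint_of_notMem ha]
    exact hab.le

theorem Ico_stoppingPoint_subset_jetSupport (hw : ContDiff ℝ 2 w) (a : ℝ) :
    Ico a (stoppingPoint w a) ⊆ jetSupport w := by
  intro t ⟨hat, ht⟩
  by_contra hmem
  rcases hat.eq_or_lt with rfl | hat
  · exact ht.ne' (stoppingPoint_of_notMem hmem)
  · exact ht.not_ge (stoppingPoint_le hw hat hmem)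

theorem Ico_iterate_stoppingPoint_subset_jetSupport (hw : ContDiff ℝ 2 w) (q : ℝ) (j : ℕ) :
    Ico q ((stoppingPoint w)^[j] q) ⊆ jetSupport w := by
  induction j with
  | zero => simp
  | succ j ih =>
    rw [Function.iterate_succ_apply']
    exact Ico_subset_Ico_union_Ico.trans
      (union_subset ih (Ico_stoppingPoint_subset_jetSupport hw _))

variable (hw : ContDiff ℝ 2 w) (hc : HasCompactSupport w)
include hw hc

theorem nonempty_excess_pos (ha : a ∈ jetSupport w) :
    {c | a < c ∧ 0 < excess w a c}.Nonempty := by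
  obtain ⟨b, hab, hb⟩ := exists_gt_notMem_jetSupport hc a
  exact ⟨b, hab, excess_pos hw ha hb hab⟩

theorem exists_forall_add_le_stoppingPoint (ht : t ∈ jetSupport w) :
    ∃ δ > 0, ∀ a ∈ jetSupport w, t - δ < a → t + δ ≤ stoppingPoint w a := by
  obtain ⟨δ, hδ, hneg⟩ := exists_forall_excess_neg hw ht
  refine ⟨δ, hδ, fun a ha hta => ?_⟩
  rw [stoppingPoint_of_mem ha]
  refine le_csInf (nonempty_excess_pos hw hc ha) fun c hc => ?_
  by_contra! hct
  exact (hneg a c hta hc.1 hct).not_gt hc.2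

theorem lt_stoppingPoint (ha : a ∈ jetSupport w) : a < stoppingPoint w a := by
  obtain ⟨δ, hδ, hle⟩ := exists_forall_add_le_stoppingPoint hw hc ha
  exact (lt_add_of_pos_right a hδ).trans_le (hle a ha (sub_lt_self a hδ))

theorem le_stoppingPoint (a : ℝ) : a ≤ stoppingPoint w a := by
  by_cases ha : a ∈ jetSupport w
  · exact (lt_stoppingPoint hw hc ha).le
  · exact (stoppingPoint_of_notMem ha).ge

theorem excess_stoppingPoint (ha : a ∈ jetSupport w) : excess w a (stoppingPoint w a) = 0 := by
  have hcont : Continuous (excess w a) := continuous_excess_right hw a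
  have hlt := lt_stoppingPoint hw hc ha
  apply le_antisymm
  · have hle : Ioo a (stoppingPoint w a) ⊆ {c | excess w a c ≤ 0} := by
      intro c ⟨hac, hc⟩
      rw [stoppingPoint_of_mem ha] at hc
      by_contra! hpos
      exact notMem_of_lt_csInf hc bddBelow_excess_pos ⟨hac, not_le.1 hpos⟩
    have := closure_minimal hle (isClosed_le hcont continuous_const)
    rw [closure_Ioo hlt.ne] at this
    exact this (right_mem_Icc.2 hlt.le)
  · have hmem := csInf_mem_closure (nonempty_excess_pos hw hc ha) bddBelow_excess_pos
    rw [← stoppingPoint_of_mem ha] at hmem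
    exact closure_minimal (fun c hc => hc.2.le) (isClosed_le continuous_const hcont) hmem

theorem stoppingPoint_lt_iff (ha : a ∈ jetSupport w) :
    stoppingPoint w a < b ↔ ∃ q : ℚ, a < q ∧ (q : ℝ) < b ∧ 0 < excess w a q := by
  rw [stoppingPoint_of_mem ha, csInf_lt_iff bddBelow_excess_pos (nonempty_excess_pos hw hc ha)]
  constructor
  · rintro ⟨c, ⟨hac, hpos⟩, hcb⟩
    have hcont : Continuous (excess w a) := continuous_excess_right hw a
    obtain ⟨q, hq⟩ := Rat.isDenseEmbedding_coe_real.dense.exists_mem_open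
      (isOpen_Ioo.inter (isOpen_lt continuous_const hcont)) ⟨c, ⟨hac, hcb⟩, hpos⟩
    exact ⟨q, hq.1.1, hq.1.2, hq.2⟩
  · rintro ⟨q, haq, hqb, hpos⟩
    exact ⟨q, ⟨haq, hpos⟩, hqb⟩

theorem monotone_iterate_stoppingPoint (q : ℝ) : Monotone fun j => (stoppingPoint w)^[j] q :=
  fun _ _ hij => Function.monotone_iterate_of_id_le (le_stoppingPoint hw hc) hij q

theorem exists_lt_iterate_stoppingPoint {q : ℝ} (h : Icc q t ⊆ jetSupport w) :
    ∃ j, t < (stoppingPoint w)^[j] q := by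
  by_contra! hle
  set L := ⨆ j, (stoppingPoint w)^[j] q
  have hbdd : BddAbove (range fun j => (stoppingPoint w)^[j] q) := ⟨t, forall_mem_range.2 hle⟩
  have hmem : ∀ j, (stoppingPoint w)^[j] q ∈ jetSupport w := fun j =>
    h ⟨monotone_iterate_stoppingPoint hw hc q j.zero_le, hle j⟩
  obtain ⟨δ, hδ, hstep⟩ := exists_forall_add_le_stoppingPoint hw hc
    (h ⟨le_ciSup hbdd 0, ciSup_le hle⟩ : L ∈ jetSupport w)
  obtain ⟨j, hj⟩ := exists_lt_of_lt_ciSup (sub_lt_self L hδ)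
  have hnext := hstep _ (hmem j) hj
  rw [← Function.iterate_succ_apply' (stoppingPoint w)] at hnext
  linarith [le_ciSup hbdd (j + 1)]

theorem iUnion_Ico_iterate_stoppingPoint (q : ℝ) :
    ⋃ j, Ico ((stoppingPoint w)^[j] q) ((stoppingPoint w)^[j + 1] q) =
      {t | q ≤ t ∧ Icc q t ⊆ jetSupport w} := by
  have hmono := monotone_iterate_stoppingPoint hw hc q
  ext t
  simp only [mem_iUnion, mem_ofPred_eq]
  constructor
  · rintro ⟨j, hj, hj'⟩
    exact ⟨(hmono j.zero_le).trans hj, fun s hs =>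
      Ico_iterate_stoppingPoint_subset_jetSupport hw q (j + 1) ⟨hs.1, hs.2.trans_lt hj'⟩⟩
  · rintro ⟨hqt, h⟩
    classical
    have hex := exists_lt_iterate_stoppingPoint hw hc h
    obtain ⟨j, hj⟩ : ∃ j, Nat.find hex = j + 1 := by
      refine Nat.exists_eq_add_one.2 (Nat.pos_of_ne_zero fun h0 => ?_)
      have := Nat.find_spec hex
      rw [h0] at this
      exact hqt.not_gt this
    exact ⟨j, not_lt.1 (Nat.find_min hex (by lia)), hj ▸ Nat.find_spec hex⟩

end Stopping

section Balanced

variable {w : ℝ → ℝ} {a b t H G : ℝ}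

/-- `[a, b]` satisfies `(b - a)² ∫ₐᵇ |w''| = ∫ₐᵇ |w|`, and up to a factor of two its length is `H`
and the average of `|w|` over it is `G`. -/
structure IsBalanced (w : ℝ → ℝ) (a b H G : ℝ) : Prop where
  length_pos : 0 < H
  average_pos : 0 < G
  le_length : H ≤ b - a
  length_le : b - a ≤ 2 * H
  le_integral : G * (b - a) ≤ ∫ t in a..b, |w t|
  integral_le : ∫ t in a..b, |w t| ≤ 2 * G * (b - a)
  excess_eq_zero : excess w a b = 0

namespace IsBalanced

theorem lt (h : IsBalanced w a b H G) : a < b := by linarith [h.length_pos, h.le_length]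

theorem le_integral_abs_deriv_deriv (h : IsBalanced w a b H G) :
    G / (2 * H) ^ 2 * (b - a) ≤ ∫ t in a..b, |deriv (deriv w) t| := by
  have hnonneg : 0 ≤ ∫ t in a..b, |deriv (deriv w) t| :=
    intervalIntegral.integral_nonneg h.lt.le fun _ _ => abs_nonneg _
  have := h.length_pos
  have := h.lt
  rw [div_mul_eq_mul_div, div_le_iff₀ (by positivity)]
  calc G * (b - a) ≤ ∫ t in a..b, |w t| := h.le_integral
    _ = (∫ t in a..b, |deriv (deriv w) t|) * (b - a) ^ 2 := by
      rw [mul_comm]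
      exact (sub_eq_zero.1 h.excess_eq_zero).symm
    _ ≤ (∫ t in a..b, |deriv (deriv w) t|) * (2 * H) ^ 2 := by
      have := h.length_le
      gcongr

theorem sq_abs_deriv_le (h : IsBalanced w a b H G) (hw : ContDiff ℝ 2 w) (ht : t ∈ Icc a b) :
    |deriv w t| ^ 2 ≤ 76 ^ 2 * (G / (2 * H) ^ 2 * G) := by
  have hH := h.length_pos
  have hlen : 0 < b - a := sub_pos.2 h.lt
  have hinterp : |deriv w t| * (b - a) ^ 2 ≤ 38 * G * (b - a) := by
    have := abs_deriv_mul_sq_le_integral_add hw h.lt ht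
    have hexcess := h.excess_eq_zero
    rw [excess] at hexcess
    linarith [h.integral_le]
  have hlinear : |deriv w t| * H ≤ 38 * G :=
    calc |deriv w t| * H ≤ |deriv w t| * (b - a) := by gcongr; exact h.le_length
      _ ≤ 38 * G := by
        refine le_of_mul_le_mul_right ?_ hlen
        linarith
  calc |deriv w t| ^ 2 = (|deriv w t| * H) ^ 2 / H ^ 2 := by field_simp
    _ ≤ (38 * G) ^ 2 / H ^ 2 := by gcongr
    _ = 76 ^ 2 * (G / (2 * H) ^ 2 * G) := by field_simp; norm_num; ring

end IsBalanced

theorem zpow_floor_logb_two_le {x : ℝ} (hx : 0 < x) :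
    (2 : ℝ) ^ ⌊Real.logb 2 x⌋ ≤ x ∧ x ≤ 2 * (2 : ℝ) ^ ⌊Real.logb 2 x⌋ := by
  have hlog : ⌊Real.logb 2 x⌋ = Int.log 2 x := by
    exact_mod_cast Real.floor_logb_natCast (b := 2) hx.le
  have hlt := Int.lt_zpow_succ_log_self one_lt_two x
  rw [hlog, ← zpow_one_add₀ two_ne_zero, add_comm]
  exact ⟨by exact_mod_cast Int.zpow_log_le_self one_lt_two hx, by exact_mod_cast hlt.le⟩

theorem isBalanced_stoppingPoint (hw : ContDiff ℝ 2 w) (hc : HasCompactSupport w)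
    (ha : a ∈ jetSupport w) :
    IsBalanced w a (stoppingPoint w a) (2 ^ ⌊Real.logb 2 (stoppingPoint w a - a)⌋)
      (2 ^ ⌊Real.logb 2 ((∫ t in a..stoppingPoint w a, |w t|) / (stoppingPoint w a - a))⌋) := by
  have hlt := lt_stoppingPoint hw hc ha
  have hlen := sub_pos.2 hlt
  obtain ⟨hH, hH'⟩ := zpow_floor_logb_two_le hlen
  obtain ⟨hG, hG'⟩ :=
    zpow_floor_logb_two_le (div_pos (integral_abs_pos_of_mem_jetSupport hw ha hlt) hlen)
  exact ⟨zpow_pos two_pos _, zpow_pos two_pos _, hH, hH', (le_div_iff₀ hlen).1 hG,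
    (div_le_iff₀ hlen).1 hG', excess_stoppingPoint hw hc ha⟩

end Balanced

section Tiling

variable {X Y : Type*} [MeasurableSpace X] [MeasurableSpace Y] {μ : Measure X} {ν : Measure Y}
  {C : ℝ} {F f g : X → ℝ} {E : Set X}

/-- A cover of `E` by countably many a.e. disjoint pieces of finite measure such that `F` is at
most `C` times the product of the averages of `f` and `g` on each piece that is not a null set. -/
def HasSparseTiling (μ : Measure X) (C : ℝ) (F f g : X → ℝ) (E : Set X) : Prop :=
  ∃ (κ : Type) (_ : Countable κ) (Q : κ → Set X),
    (∀ k, MeasurableSet (Q k) ∧ μ (Q k) < ⊤) ∧ Pairwise (AEDisjoint μ on Q) ∧ ⋃ k, Q k = E ∧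
      ∀ k, 0 < μ (Q k) → ∀ x ∈ Q k, F x ≤ C * ((⨍ y in Q k, f y ∂μ) * ⨍ y in Q k, g y ∂μ)

namespace HasSparseTiling

theorem of_piece (hE : MeasurableSet E) (hfin : μ E < ⊤)
    (hF : 0 < μ E → ∀ x ∈ E, F x ≤ C * ((⨍ y in E, f y ∂μ) * ⨍ y in E, g y ∂μ)) :
    HasSparseTiling μ C F f g E :=
  ⟨Unit, inferInstance, fun _ => E, fun _ => ⟨hE, hfin⟩, Subsingleton.pairwise, iUnion_const E,
    fun _ => hF⟩

theorem iUnion {ι : Type} [Countable ι] {E : ι → Set X}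
    (hE : ∀ i, HasSparseTiling μ C F f g (E i)) (hdisj : Pairwise (AEDisjoint μ on E)) :
    HasSparseTiling μ C F f g (⋃ i, E i) := by
  choose κ hκ Q hQ hQdisj hQE hF using hE
  have := hκ
  have hsub : ∀ i k, Q i k ⊆ E i := fun i k => hQE i ▸ subset_iUnion (Q i) k
  refine ⟨Σ i, κ i, inferInstance, fun k => Q k.1 k.2, fun k => hQ k.1 k.2, ?_, ?_,
    fun k => hF k.1 k.2⟩
  · rintro ⟨i, k⟩ ⟨j, l⟩ hne
    rcases eq_or_ne i j with rfl | hij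
    · exact hQdisj i fun hkl => hne (congrArg (Sigma.mk i) hkl)
    · exact (hdisj hij).mono (hsub i k) (hsub j l)
  · simp only [iUnion_sigma, hQE]

theorem union {E' : Set X} (hE : HasSparseTiling μ C F f g E)
    (hE' : HasSparseTiling μ C F f g E') (hdisj : AEDisjoint μ E E') :
    HasSparseTiling μ C F f g (E ∪ E') := by
  have : Std.Symm (AEDisjoint μ) := ⟨fun _ _ h => h.symm⟩
  rw [union_eq_iUnion]
  exact iUnion (Bool.forall_bool.2 ⟨hE', hE⟩) (pairwise_on_bool.2 hdisj)

theorem comp_measurableEquiv {F f g : Y → ℝ} {E : Set Y} (h : HasSparseTiling ν C F f g E)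
    {e : X ≃ᵐ Y} (he : MeasurePreserving e μ ν) :
    HasSparseTiling μ C (F ∘ e) (f ∘ e) (g ∘ e) (e ⁻¹' E) := by
  obtain ⟨κ, hκ, Q, hQ, hdisj, rfl, hF⟩ := h
  have hmeasure : ∀ k, μ (e ⁻¹' Q k) = ν (Q k) := fun k => he.measure_preimage_equiv _
  have haverage : ∀ (φ : Y → ℝ) k, ⨍ x in e ⁻¹' Q k, φ (e x) ∂μ = ⨍ y in Q k, φ y ∂ν :=
    fun φ k => by
      rw [setAverage_eq, setAverage_eq, he.setIntegral_preimage_emb e.measurableEmbedding,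
        measureReal_def, measureReal_def, hmeasure]
  refine ⟨κ, hκ, fun k => e ⁻¹' Q k, fun k => ⟨e.measurable (hQ k).1, ?_⟩, fun k l hkl => ?_,
    preimage_iUnion.symm, fun k hk x hx => ?_⟩
  · rw [hmeasure]
    exact (hQ k).2
  · exact (hdisj hkl).preimage he.quasiMeasurePreserving
  · simp only [Function.comp_apply, haverage]
    exact hF k (hmeasure k ▸ hk) (e x) hx

end HasSparseTiling

theorem exists_pairwise_disjoint_measurable_refinement {ι : Type*} [Countable ι] {A : ι → Set X}
    (hA : ∀ i, MeasurableSet (A i)) :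
    ∃ D : ι → Set X, (∀ i, D i ⊆ A i) ∧ (∀ i, MeasurableSet (D i)) ∧ Pairwise (Disjoint on D) ∧
      ⋃ i, D i = ⋃ i, A i := by
  obtain ⟨r, hr⟩ := exists_injective_nat ι
  set B : ℕ → Set X := fun n => ⋃ (i) (_ : r i = n), A i
  have hB : ∀ i, B (r i) = A i := fun i => by simp [B, hr.eq_iff]
  refine ⟨fun i => disjointed B (r i), fun i => (disjointed_subset _ _).trans (hB i).subset,
    fun i => .disjointed (fun n => .iUnion fun i => .iUnion fun _ => hA i) _,
    fun i j hij => disjoint_disjointed B (hr.ne hij), ?_⟩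
  refine subset_antisymm (iUnion_mono fun i => (disjointed_subset _ _).trans (hB i).subset) ?_
  intro x hx
  obtain ⟨i, hi⟩ := mem_iUnion.1 hx
  obtain ⟨n, hn⟩ := mem_iUnion.1 (iUnion_disjointed (f := B) ▸ mem_iUnion.2 ⟨r i, hB i ▸ hi⟩)
  obtain ⟨j, rfl, -⟩ := mem_iUnion₂.1 (disjointed_subset B n hn)
  exact mem_iUnion.2 ⟨j, hn⟩

theorem HasSparseTiling.exists_pairwise_disjoint_ae_cover (h : HasSparseTiling μ C F f g E) :
    ∃ (ι : Type) (_ : Countable ι) (Q : ι → Set X),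
      (∀ k, MeasurableSet (Q k) ∧ 0 < μ (Q k) ∧ μ (Q k) < ⊤) ∧ Pairwise (Disjoint on Q) ∧
      (∀ k, ∀ x ∈ Q k, F x ≤ C * ((⨍ y in Q k, f y ∂μ) * ⨍ y in Q k, g y ∂μ)) ∧
      ∀ᵐ x ∂μ, x ∈ E → ∃ k, x ∈ Q k := by
  obtain ⟨κ, hκ, Q₀, hQ₀, hdisj₀, rfl, hF⟩ := h
  obtain ⟨Q, hsub, heq, hmeas, hdisj⟩ := exists_subordinate_pairwise_disjoint
    (s := fun k : {k // 0 < μ (Q₀ k)} => Q₀ k) (fun k => (hQ₀ k).1.nullMeasurableSet)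
    (hdisj₀.comp_of_injective Subtype.val_injective)
  refine ⟨{k // 0 < μ (Q₀ k)}, inferInstance, Q, fun k => ⟨hmeas k, ?_, ?_⟩, hdisj,
    fun k x hx => ?_, ?_⟩
  · exact measure_congr (heq k) ▸ k.2
  · exact measure_congr (heq k) ▸ (hQ₀ k).2
  · rw [← setAverage_congr (heq k), ← setAverage_congr (heq k)]
    exact hF k k.2 x (hsub k hx)
  · have hpiece : ∀ k, ∀ᵐ x ∂μ, x ∈ Q₀ k → ∃ m, x ∈ Q m := fun k => by
      rcases eq_or_ne (μ (Q₀ k)) 0 with hk | hk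
      · exact (measure_eq_zero_iff_ae_notMem.1 hk).mono fun x hx hxk => absurd hxk hx
      · have hpos : 0 < μ (Q₀ k) := pos_iff_ne_zero.2 hk
        exact (heq ⟨k, hpos⟩).mem_iff.mono fun x hx hxk => ⟨⟨k, hpos⟩, hx.1 hxk⟩
    filter_upwards [ae_all_iff.2 hpiece] with x hx hxE
    obtain ⟨k, hk⟩ := mem_iUnion.1 hxE
    exact hx k hk

section NullSet

variable [TopologicalSpace X] [OpensMeasurableSpace X] [μ.IsOpenPosMeasure]

theorem exists_ae_eq_pairwise_disjoint_cover {ι : Type*} [Countable ι] {Q : ι → Set X} {a : ι → ℝ}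
    (hF : Continuous F) (hF0 : ∀ x, 0 ≤ F x) (hQ : ∀ k, MeasurableSet (Q k))
    (hdisj : Pairwise (Disjoint on Q)) (hFa : ∀ k, ∀ x ∈ Q k, F x ≤ a k)
    (hcover : ∀ᵐ x ∂μ, F x ≠ 0 → ∃ k, x ∈ Q k) :
    ∃ P : ι → Set X, (∀ k, MeasurableSet (P k) ∧ P k =ᵐ[μ] Q k) ∧ Pairwise (Disjoint on P) ∧
      ∀ x, F x ≠ 0 → ∃ k, x ∈ P k ∧ F x ≤ 2 * a k := by
  set R := {x | F x ≠ 0} \ ⋃ k, Q k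
  have hR : MeasurableSet R := (isOpen_ne_fun hF continuous_const).measurableSet.diff (.iUnion hQ)
  have hR0 : R =ᵐ[μ] (∅ : Set X) := by
    filter_upwards [hcover] with x hx
    exact eq_false fun hxR => hxR.2 (mem_iUnion.2 (hx hxR.1))
  obtain ⟨D, hDsub, hD, hDdisj, hDunion⟩ := exists_pairwise_disjoint_measurable_refinement
    fun k => measurableSet_le hF.measurable (measurable_const (a := 2 * a k))
  have hexists : ∀ x, F x ≠ 0 → ∃ k, F x ≤ 2 * a k := by
    -- Almost every `y` with `F y ≠ 0` lies in a piece; take one near `x` with `F x < 2 * F y`.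
    intro x hx
    obtain ⟨y, hy, hyQ⟩ := (Measure.dense_of_ae hcover).inter_open_nonempty {y | F x < 2 * F y}
      (isOpen_lt continuous_const (continuous_const.mul hF))
      ⟨x, by have := (hF0 x).lt_of_ne' hx; simp only [mem_ofPred_eq]; linarith⟩
    obtain ⟨k, hk⟩ := hyQ fun hy0 => by
      have := hF0 x
      simp only [mem_ofPred_eq] at hy
      linarith
    exact ⟨k, by linarith [hFa k y hk, show F x < 2 * F y from hy]⟩
  refine ⟨fun k => Q k ∪ R ∩ D k, fun k => ⟨(hQ k).union (hR.inter (hD k)), ?_⟩,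
    fun k l hkl => ?_, fun x hx => ?_⟩
  · simpa using (ae_eq_refl (Q k)).union (hR0.inter (ae_eq_refl (D k)))
  · have hQR : ∀ k l, Disjoint (Q k) (R ∩ D l) := fun k l =>
      disjoint_left.2 fun x hx hxR => hxR.1.2 (mem_iUnion.2 ⟨k, hx⟩)
    exact .union_left (.union_right (hdisj hkl) (hQR k l))
      (.union_right (hQR l k).symm ((hDdisj hkl).mono inter_subset_right inter_subset_right))
  · by_cases hxQ : ∃ k, x ∈ Q k
    · obtain ⟨k, hk⟩ := hxQ
      exact ⟨k, .inl hk, by linarith [hFa k x hk, hF0 x]⟩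
    · obtain ⟨k, hk⟩ := mem_iUnion.1 (hDunion ▸ mem_iUnion.2 (hexists x hx) : x ∈ ⋃ k, D k)
      exact ⟨k, .inr ⟨⟨hx, mt mem_iUnion.1 hxQ⟩, hk⟩, hDsub k hk⟩

theorem HasSparseTiling.exists_pairwise_disjoint_cover (h : HasSparseTiling μ C F f g E)
    (hF : Continuous F) (hF0 : ∀ x, 0 ≤ F x) (hE : {x | F x ≠ 0} ⊆ E) :
    ∃ (ι : Type) (_ : Countable ι) (P : ι → Set X),
      (∀ k, MeasurableSet (P k) ∧ 0 < μ (P k) ∧ μ (P k) < ⊤) ∧ Pairwise (Disjoint on P) ∧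
      ∀ x, F x ≠ 0 → ∃ k, x ∈ P k ∧
        F x ≤ 2 * C * ((⨍ y in P k, f y ∂μ) * ⨍ y in P k, g y ∂μ) := by
  obtain ⟨ι, hι, Q, hQ, hdisj, hFQ, hcover⟩ := h.exists_pairwise_disjoint_ae_cover
  obtain ⟨P, hP, hPdisj, hPcover⟩ := exists_ae_eq_pairwise_disjoint_cover hF hF0
    (fun k => (hQ k).1) hdisj hFQ (hcover.mono fun x hx hFx => hx (hE hFx))
  refine ⟨ι, hι, P, fun k => ⟨(hP k).1, ?_⟩, hPdisj, fun x hx => ?_⟩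
  · rw [measure_congr (hP k).2]
    exact (hQ k).2
  · obtain ⟨k, hk, hle⟩ := hPcover x hx
    refine ⟨k, hk, ?_⟩
    rwa [setAverage_congr (hP k).2, setAverage_congr (hP k).2, mul_assoc]

end NullSet

end Tiling

section Region

variable {S : Type*} [MeasurableSpace S] {μ : Measure S} {T : Set S} {a b : S → ℝ}

/-- The region over `T` between the graphs of `a` (included) and `b` (excluded). -/
def regionBetweenIco (T : Set S) (a b : S → ℝ) : Set (S × ℝ) :=
  {p | p.1 ∈ T ∧ p.2 ∈ Ico (a p.1) (b p.1)}

theorem measurableSet_regionBetweenIco (hT : MeasurableSet T) (ha : Measurable a)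
    (hb : Measurable b) : MeasurableSet (regionBetweenIco T a b) :=
  measurableSet_region_between_co ha hb hT

theorem setIntegral_regionBetweenIco [SFinite μ] {φ : S × ℝ → ℝ} (hT : MeasurableSet T)
    (ha : Measurable a) (hb : Measurable b) (hab : ∀ s ∈ T, a s ≤ b s)
    (hφ : IntegrableOn φ (regionBetweenIco T a b) (μ.prod volume)) :
    ∫ p in regionBetweenIco T a b, φ p ∂(μ.prod volume) =
      ∫ s in T, ∫ t in a s..b s, φ (s, t) ∂volume ∂μ := by
  have hQ := measurableSet_regionBetweenIco hT ha hb
  rw [← integral_indicator hQ, integral_prod _ (hφ.integrable_indicator hQ),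
    ← integral_indicator hT]
  congr 1 with s
  by_cases hs : s ∈ T
  · rw [indicator_of_mem hs, intervalIntegral.integral_of_le (hab s hs),
      ← integral_Ico_eq_integral_Ioc, ← integral_indicator measurableSet_Ico]
    congr 1 with t
    simp only [indicator, regionBetweenIco, mem_ofPred_eq, hs, true_and]
  · rw [indicator_of_notMem hs]
    simp [regionBetweenIco, indicator, hs]

theorem le_setAverage_regionBetweenIco [SFinite μ] {φ : S × ℝ → ℝ} {c : ℝ}
    (hT : MeasurableSet T) (ha : Measurable a) (hb : Measurable b) (hab : ∀ s ∈ T, a s ≤ b s)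
    (hcont : ∀ s, Continuous fun t => φ (s, t))
    (hφ : IntegrableOn φ (regionBetweenIco T a b) (μ.prod volume))
    (hpos : 0 < μ.prod volume (regionBetweenIco T a b))
    (hfin : μ.prod volume (regionBetweenIco T a b) < ⊤)
    (hc : ∀ s ∈ T, c * (b s - a s) ≤ ∫ t in a s..b s, φ (s, t)) :
    c ≤ ⨍ p in regionBetweenIco T a b, φ p ∂(μ.prod volume) := by
  have hconst : IntegrableOn (fun _ : S × ℝ => c) (regionBetweenIco T a b) (μ.prod volume) :=
    integrableOn_const hfin.ne
  have hsub : IntegrableOn (fun p => φ p - c) (regionBetweenIco T a b) (μ.prod volume) :=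
    hφ.sub hconst
  have hmeas : 0 < (μ.prod volume).real (regionBetweenIco T a b) :=
    ENNReal.toReal_pos hpos.ne' hfin.ne
  have hnonneg : 0 ≤ ∫ p in regionBetweenIco T a b, (φ p - c) ∂(μ.prod volume) := by
    rw [setIntegral_regionBetweenIco hT ha hb hab hsub]
    refine setIntegral_nonneg hT fun s hs => ?_
    rw [intervalIntegral.integral_sub
      ((hcont s).intervalIntegrable _ _) intervalIntegrable_const,
      intervalIntegral.integral_const, smul_eq_mul]
    linarith [hc s hs]
  rw [integral_sub hφ hconst, setIntegral_const, smul_eq_mul] at hnonneg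
  rw [setAverage_eq, smul_eq_mul, inv_mul_eq_div, le_div_iff₀ hmeas]
  linarith

end Region

section Family

theorem deriv_deriv_comp_neg (w : ℝ → ℝ) (t : ℝ) :
    deriv (deriv fun t => w (-t)) t = deriv (deriv w) (-t) := by
  have hderiv : (deriv fun t => w (-t)) = fun t => -deriv w (-t) :=
    funext fun t => deriv_comp_neg ..
  rw [hderiv, deriv.fun_neg, deriv_comp_neg, neg_neg]

theorem mem_jetSupport_comp_neg {w : ℝ → ℝ} {t : ℝ} :
    t ∈ jetSupport (fun t => w (-t)) ↔ -t ∈ jetSupport w := by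
  simp only [jetSupport, mem_ofPred_eq, deriv_comp_neg, neg_ne_zero]

/-- A family of compactly supported `C²` functions on the line, jointly continuous together with
its first two derivatives: the restrictions of a `C²` function to parallel lines. -/
structure IsC2Family {S : Type*} [TopologicalSpace S] (w : S → ℝ → ℝ) : Prop where
  contDiff : ∀ s, ContDiff ℝ 2 (w s)
  hasCompactSupport : ∀ s, HasCompactSupport (w s)
  continuous : Continuous fun p : S × ℝ => w p.1 p.2
  continuous_deriv : Continuous fun p : S × ℝ => deriv (w p.1) p.2
  continuous_deriv_deriv : Continuous fun p : S × ℝ => deriv (deriv (w p.1)) p.2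

namespace IsC2Family

section Topology

variable {S : Type*} [TopologicalSpace S] {w : S → ℝ → ℝ} (hw : IsC2Family w)
include hw

theorem comp_neg : IsC2Family fun s t => w s (-t) where
  contDiff _ := (hw.contDiff _).comp contDiff_neg
  hasCompactSupport _ := (hw.hasCompactSupport _).comp_homeomorph (.neg ℝ)
  continuous := hw.continuous.comp (continuous_fst.prodMk continuous_snd.neg)
  continuous_deriv := by
    simp only [deriv_comp_neg]
    exact (hw.continuous_deriv.comp (continuous_fst.prodMk continuous_snd.neg)).neg
  continuous_deriv_deriv := by
    simp only [deriv_deriv_comp_neg]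
    exact hw.continuous_deriv_deriv.comp (continuous_fst.prodMk continuous_snd.neg)

theorem isOpen_setOf_mem_jetSupport : IsOpen {p : S × ℝ | p.2 ∈ jetSupport (w p.1)} :=
  (isOpen_ne_fun hw.continuous continuous_const).union
    (isOpen_ne_fun hw.continuous_deriv continuous_const)

theorem isOpen_setOf_mem_ordConnectedComponent (q r : ℝ) :
    IsOpen {s | r ∈ (jetSupport (w s)).ordConnectedComponent q} :=
  isOpen_iff_mem_nhds.2 fun _ hs =>
    (isCompact_uIcc (a := q) (b := r)).eventually_forall_of_forall_eventually fun _ ht =>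
      hw.isOpen_setOf_mem_jetSupport.mem_nhds (hs ht)

theorem ordConnectedComponent_jetSupport_mem_nhds {s : S} {t : ℝ} (ht : t ∈ jetSupport (w s)) :
    (jetSupport (w s)).ordConnectedComponent t ∈ 𝓝 t :=
  ordConnectedComponent_mem_nhds.2 <|
    (hw.isOpen_setOf_mem_jetSupport.preimage (.prodMk_right s)).mem_nhds ht

section Measurable

variable [MeasurableSpace S] [OpensMeasurableSpace S] {a : S → ℝ}

theorem measurableSet_setOf_mem_jetSupport (ha : Measurable a) :
    MeasurableSet {s | a s ∈ jetSupport (w s)} :=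
  (measurable_id.prodMk ha) hw.isOpen_setOf_mem_jetSupport.measurableSet

theorem measurable_stoppingPoint (ha : Measurable a) :
    Measurable fun s => stoppingPoint (w s) (a s) := by
  refine measurable_of_Iio fun r => ?_
  have hJ := hw.measurableSet_setOf_mem_jetSupport ha
  have hexcess : ∀ q : ℝ, Continuous fun p : S × ℝ => excess (w p.1) p.2 q := fun q =>
    continuous_excess (w := fun p : S × ℝ => w p.1)
      (hw.continuous.comp (continuous_fst.fst.prodMk continuous_snd))
      (hw.continuous_deriv_deriv.comp (continuous_fst.fst.prodMk continuous_snd))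
      continuous_snd continuous_const
  have hset : (fun s => stoppingPoint (w s) (a s)) ⁻¹' Iio r =
      ({s | a s ∈ jetSupport (w s)} ∩
        ⋃ q : ℚ, {s | a s < q ∧ (q : ℝ) < r ∧ 0 < excess (w s) (a s) q}) ∪
      ({s | a s ∈ jetSupport (w s)}ᶜ ∩ {s | a s < r}) := by
    ext s
    by_cases hs : a s ∈ jetSupport (w s)
    · simp [hs, stoppingPoint_lt_iff (hw.contDiff s) (hw.hasCompactSupport s) hs]
    · simp [hs, stoppingPoint_of_notMem hs]
  rw [hset]
  refine (hJ.inter (.iUnion fun q => ?_)).union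
    (hJ.compl.inter (measurableSet_lt ha measurable_const))
  exact (measurableSet_lt ha measurable_const).inter
    ((MeasurableSet.const _).inter (measurableSet_lt measurable_const
      ((hexcess q).measurable.comp (measurable_id.prodMk ha))))

theorem measurable_iterate_stoppingPoint (q : ℝ) (j : ℕ) :
    Measurable fun s => (stoppingPoint (w s))^[j] q := by
  induction j with
  | zero => exact measurable_const
  | succ j ih =>
    simp only [Function.iterate_succ_apply']
    exact hw.measurable_stoppingPoint ih

theorem measurable_integral_abs {b : S → ℝ} (ha : Measurable a) (hb : Measurable b) :
    Measurable fun s => ∫ t in a s..b s, |w s t| := by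
  have hcont : Continuous fun p : S × ℝ × ℝ => ∫ t in p.2.1..p.2.2, |w p.1 t| :=
    continuous_intervalIntegral_of_continuous
      (hw.continuous.comp (continuous_fst.fst.prodMk continuous_snd)).abs
      continuous_snd.fst continuous_snd.snd
  exact hcont.measurable.comp (measurable_id.prodMk (ha.prodMk hb))

end Measurable

end Topology

end IsC2Family

end Family

section JetTiling

/-- A sparse tiling of `E ⊆ S × ℝ` that controls the squares of the first derivatives of the
functions `w s` through their second derivatives and their values. -/
abbrev HasJetTiling {S : Type*} [MeasurableSpace S] (μ : Measure S) (w : S → ℝ → ℝ)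
    (E : Set (S × ℝ)) : Prop :=
  HasSparseTiling (μ.prod volume) (76 ^ 2) (fun p => |deriv (w p.1) p.2| ^ 2)
    (fun p => |deriv (deriv (w p.1)) p.2|) (fun p => |w p.1 p.2|) E

theorem HasSparseTiling.regionBetweenIco_of_fibers {S : Type*} [MeasurableSpace S]
    {ν : Measure (S × ℝ)} {ι : Type} [Countable ι] {C : ℝ} {F f g : S × ℝ → ℝ} {T : Set S}
    {a b : S → ℝ} (label : S → ι)
    (h : ∀ k, HasSparseTiling ν C F f g (regionBetweenIco (T ∩ label ⁻¹' {k}) a b)) :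
    HasSparseTiling ν C F f g (regionBetweenIco T a b) := by
  have hunion : regionBetweenIco T a b = ⋃ k, regionBetweenIco (T ∩ label ⁻¹' {k}) a b := by
    ext p
    simp [regionBetweenIco, and_assoc]
  rw [hunion]
  refine .iUnion h fun k l hkl => (disjoint_left.2 fun p hpk hpl => hkl ?_).aedisjoint
  exact (mem_singleton_iff.1 hpk.1.2).symm.trans (mem_singleton_iff.1 hpl.1.2)

variable {S : Type*} [MetricSpace S] [ProperSpace S] [MeasurableSpace S]
  [OpensMeasurableSpace S] {μ : Measure S} [IsLocallyFiniteMeasure μ] {w : S → ℝ → ℝ}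
  (hw : IsC2Family w) {T : Set S} (hT : MeasurableSet T) {a b : S → ℝ}
include hw hT

theorem hasJetTiling_of_isBalanced {H G : ℝ} {K : Set (S × ℝ)} (ha : Measurable a)
    (hb : Measurable b) (hbal : ∀ s ∈ T, IsBalanced (w s) (a s) (b s) H G) (hK : IsCompact K)
    (hsub : regionBetweenIco T a b ⊆ K) : HasJetTiling μ w (regionBetweenIco T a b) := by
  have hfin : μ.prod volume (regionBetweenIco T a b) < ⊤ :=
    (measure_mono hsub).trans_lt hK.measure_lt_top
  have hle_average : ∀ {φ : S × ℝ → ℝ} {c : ℝ}, Continuous φ →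
      (∀ s ∈ T, c * (b s - a s) ≤ ∫ t in a s..b s, φ (s, t)) →
      0 < μ.prod volume (regionBetweenIco T a b) →
      c ≤ ⨍ p in regionBetweenIco T a b, φ p ∂(μ.prod volume) := fun hφ hc hpos =>
    le_setAverage_regionBetweenIco hT ha hb (fun s hs => (hbal s hs).lt.le)
      (fun s => hφ.comp (.prodMk_right s))
      ((hφ.continuousOn.integrableOn_compact hK).mono_set hsub) hpos hfin hc
  refine .of_piece (measurableSet_regionBetweenIco hT ha hb) hfin fun hpos p hp => ?_
  have hp' := hbal p.1 hp.1
  have hG := hp'.average_pos.le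
  calc |deriv (w p.1) p.2| ^ 2 ≤ 76 ^ 2 * (G / (2 * H) ^ 2 * G) :=
        hp'.sq_abs_deriv_le (hw.contDiff p.1) (Ico_subset_Icc_self hp.2)
    _ ≤ _ := by
      have hf := hle_average hw.continuous_deriv_deriv.abs
        (fun s hs => (hbal s hs).le_integral_abs_deriv_deriv) hpos
      have hg := hle_average hw.continuous.abs (fun s hs => (hbal s hs).le_integral) hpos
      have hc : 0 ≤ G / (2 * H) ^ 2 := by positivity
      gcongr
      exact hc.trans hf

variable [Nonempty S]

-- The lines are grouped by the sizes of the interval and of the average of `|w|` over it, and by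
-- position so that each group lives in a compact set.
theorem hasJetTiling_stoppingPoint_of_mem (ha : Measurable a)
    (hmem : ∀ s ∈ T, a s ∈ jetSupport (w s)) :
    HasJetTiling μ w (regionBetweenIco T a fun s => stoppingPoint (w s) (a s)) := by
  obtain ⟨s₀⟩ := ‹Nonempty S›
  set b : S → ℝ := fun s => stoppingPoint (w s) (a s)
  have hb : Measurable b := hw.measurable_stoppingPoint ha
  set label : S → ℤ × ℤ × ℤ × ℤ := fun s => (⌊Real.logb 2 (b s - a s)⌋,
    ⌊Real.logb 2 ((∫ t in a s..b s, |w s t|) / (b s - a s))⌋, ⌊dist s s₀⌋, ⌊a s⌋)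
  have hlabel : Measurable label :=
    ((hb.sub ha).log.div_const _).floor.prodMk
      ((((hw.measurable_integral_abs ha hb).div (hb.sub ha)).log.div_const _).floor.prodMk
        ((continuous_id.dist continuous_const).measurable.floor.prodMk ha.floor))
  have hbal : ∀ s ∈ T, IsBalanced (w s) (a s) (b s) (2 ^ (label s).1) (2 ^ (label s).2.1) :=
    fun s hs => isBalanced_stoppingPoint (hw.contDiff s) (hw.hasCompactSupport s) (hmem s hs)
  refine .regionBetweenIco_of_fibers label fun k =>
    hasJetTiling_of_isBalanced (H := 2 ^ k.1) (G := 2 ^ k.2.1)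
      (K := Metric.closedBall s₀ (k.2.2.1 + 1) ×ˢ Icc (k.2.2.2 : ℝ) (k.2.2.2 + 1 + 2 * 2 ^ k.1))
      hw (hT.inter (hlabel (measurableSet_singleton k))) ha hb ?_
      ((isCompact_closedBall s₀ _).prod isCompact_Icc) ?_
  · rintro s ⟨hs, rfl⟩
    exact hbal s hs
  · rintro ⟨s, t⟩ ⟨⟨hs, rfl⟩, hat, htb⟩
    have hlength := (hbal s hs).length_le
    refine ⟨Metric.mem_closedBall.2 (Int.lt_floor_add_one _).le, (Int.floor_le _).trans hat, ?_⟩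
    linarith [Int.lt_floor_add_one (a s)]

theorem hasJetTiling_stoppingPoint (ha : Measurable a) :
    HasJetTiling μ w (regionBetweenIco T a fun s => stoppingPoint (w s) (a s)) := by
  have hrestrict : (regionBetweenIco T a fun s => stoppingPoint (w s) (a s)) =
      regionBetweenIco (T ∩ {s | a s ∈ jetSupport (w s)}) a fun s => stoppingPoint (w s) (a s) := by
    ext p
    refine ⟨fun hp => ⟨⟨hp.1, ?_⟩, hp.2⟩, fun hp => ⟨hp.1.1, hp.2⟩⟩
    exact Ico_stoppingPoint_subset_jetSupport (hw.contDiff p.1) _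
      (left_mem_Ico.2 (hp.2.1.trans_lt hp.2.2))
  rw [hrestrict]
  exact hasJetTiling_stoppingPoint_of_mem hw
    (hT.inter (hw.measurableSet_setOf_mem_jetSupport ha)) ha fun _ hs => hs.2

theorem hasJetTiling_right_ordConnectedComponent (q : ℝ) :
    HasJetTiling μ w {p | p.1 ∈ T ∧ q ≤ p.2 ∧ Icc q p.2 ⊆ jetSupport (w p.1)} := by
  have hunion : {p : S × ℝ | p.1 ∈ T ∧ q ≤ p.2 ∧ Icc q p.2 ⊆ jetSupport (w p.1)} =
      ⋃ j, regionBetweenIco T (fun s => (stoppingPoint (w s))^[j] q)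
        fun s => stoppingPoint (w s) ((stoppingPoint (w s))^[j] q) := by
    ext p
    have := Set.ext_iff.1 (iUnion_Ico_iterate_stoppingPoint (hw.contDiff p.1)
      (hw.hasCompactSupport p.1) q) p.2
    simp only [mem_iUnion, mem_ofPred_eq, Function.iterate_succ_apply'] at this
    simp only [regionBetweenIco, mem_iUnion, mem_ofPred_eq, exists_and_left, this]
  rw [hunion]
  refine .iUnion (fun j => hasJetTiling_stoppingPoint hw hT
    (hw.measurable_iterate_stoppingPoint q j)) fun j k hjk =>
      (disjoint_left.2 fun p hj hk => ?_).aedisjoint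
  have hmem : ∀ {l}, p.2 ∈ Ico ((stoppingPoint (w p.1))^[l] q)
      (stoppingPoint (w p.1) ((stoppingPoint (w p.1))^[l] q)) →
      p.2 ∈ Ico ((stoppingPoint (w p.1))^[l] q) ((stoppingPoint (w p.1))^[Order.succ l] q) :=
    fun h => (Function.iterate_succ_apply' (stoppingPoint (w p.1)) _ q).symm ▸ h
  exact disjoint_left.1 ((monotone_iterate_stoppingPoint (hw.contDiff p.1)
    (hw.hasCompactSupport p.1) q).pairwise_disjoint_on_Ico_succ hjk) (hmem hj.2) (hmem hk.2)

theorem hasJetTiling_left_ordConnectedComponent (q : ℝ) :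
    HasJetTiling μ w {p | p.1 ∈ T ∧ p.2 ≤ q ∧ Icc p.2 q ⊆ jetSupport (w p.1)} := by
  set e : S × ℝ ≃ᵐ S × ℝ := (MeasurableEquiv.refl S).prodCongr (MeasurableEquiv.neg ℝ)
  have he : MeasurePreserving e (μ.prod volume) (μ.prod volume) :=
    (MeasurePreserving.id μ).prod (Measure.measurePreserving_neg volume)
  have happly : ∀ p, e p = (p.1, -p.2) := fun _ => rfl
  have hIcc : ∀ s t, Icc (-q) (-t) ⊆ jetSupport (fun t => w s (-t)) ↔
      Icc t q ⊆ jetSupport (w s) := fun s t => by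
    rw [← neg_subset_neg]
    simp [subset_def, mem_jetSupport_comp_neg]
  simpa only [HasJetTiling, Function.comp_def, happly, deriv_comp_neg, abs_neg,
    deriv_deriv_comp_neg, neg_neg, preimage_ofPred_eq, neg_le_neg_iff, hIcc] using
    (hasJetTiling_right_ordConnectedComponent hw.comp_neg hT (-q)).comp_measurableEquiv he

theorem hasJetTiling_ordConnectedComponent (q : ℝ) :
    HasJetTiling μ w {p | p.1 ∈ T ∧ p.2 ∈ (jetSupport (w p.1)).ordConnectedComponent q} := by
  have hunion : {p : S × ℝ | p.1 ∈ T ∧ p.2 ∈ (jetSupport (w p.1)).ordConnectedComponent q} =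
      {p | p.1 ∈ T ∧ q ≤ p.2 ∧ Icc q p.2 ⊆ jetSupport (w p.1)} ∪
        {p | p.1 ∈ T ∧ p.2 ≤ q ∧ Icc p.2 q ⊆ jetSupport (w p.1)} := by
    ext p
    simp only [mem_union, mem_ofPred_eq, ← and_or_left, mem_ordConnectedComponent]
    refine and_congr_right fun _ => ⟨fun h => ?_, ?_⟩
    · exact (le_total q p.2).imp (fun hle => ⟨hle, uIcc_of_le hle ▸ h⟩)
        fun hle => ⟨hle, uIcc_of_ge hle ▸ h⟩
    · rintro (⟨hle, h⟩ | ⟨hle, h⟩)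
      · rwa [uIcc_of_le hle]
      · rwa [uIcc_of_ge hle]
  have hnull : μ.prod volume (univ ×ˢ {q}) = 0 := by simp
  rw [hunion]
  exact (hasJetTiling_right_ordConnectedComponent hw hT q).union
    (hasJetTiling_left_ordConnectedComponent hw hT q)
    (measure_mono_null (fun p hp => mk_mem_prod (mem_univ _)
      (mem_singleton_iff.2 (le_antisymm hp.2.2.1 hp.1.2.1))) hnull)

omit hT in
theorem hasJetTiling_jetSupport : HasJetTiling μ w {p | p.2 ∈ jetSupport (w p.1)} := by
  set q : ℕ → ℝ := TopologicalSpace.denseSeq ℝ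
  set T : ℕ → Set S := fun n => {s | ∀ m < n, q m ∉ (jetSupport (w s)).ordConnectedComponent (q n)}
  have hT : ∀ n, MeasurableSet (T n) := fun n => by
    simp only [T, ofPred_forall]
    exact .iInter fun m => .iInter fun _ =>
      (hw.isOpen_setOf_mem_ordConnectedComponent (q n) (q m)).measurableSet.compl
  set E : ℕ → Set (S × ℝ) := fun n =>
    {p | p.1 ∈ T n ∧ p.2 ∈ (jetSupport (w p.1)).ordConnectedComponent (q n)}
  have hunion : {p : S × ℝ | p.2 ∈ jetSupport (w p.1)} = ⋃ n, E n := by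
    refine Subset.antisymm (fun p hp => ?_)
      (iUnion_subset fun n p hp => ordConnectedComponent_subset (α := ℝ) hp.2)
    have hexists : ∃ n, q n ∈ (jetSupport (w p.1)).ordConnectedComponent p.2 :=
      (TopologicalSpace.denseRange_denseSeq ℝ).mem_nhds
        (hw.ordConnectedComponent_jetSupport_mem_nhds hp)
    classical
    refine mem_iUnion.2 ⟨Nat.find hexists, fun m hm hmem => Nat.find_min hexists hm
      (mem_ordConnectedComponent_trans (Nat.find_spec hexists) hmem), ?_⟩
    exact mem_ordConnectedComponent_comm.1 (Nat.find_spec hexists)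
  have hlt : ∀ {m n} {p : S × ℝ}, m < n → p ∈ E m → p ∉ E n := fun hmn hm hn =>
    hn.1 _ hmn (mem_ordConnectedComponent_trans hn.2 (mem_ordConnectedComponent_comm.1 hm.2))
  rw [hunion]
  refine .iUnion (fun n => hasJetTiling_ordConnectedComponent hw (hT n) (q n)) fun m n hmn =>
    (disjoint_left.2 fun p hm hn => ?_).aedisjoint
  exact hmn.lt_or_gt.elim (fun h => hlt h hm hn) fun h => hlt h hn hm

end JetTiling

section EuclideanSpace

variable {m : ℕ} {i : Fin (m + 1)} {u : (Fin (m + 1) → ℝ) → ℝ}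

theorem contDiff_pderivIter_one {n : ℕ} {i : Fin n} {u : (Fin n → ℝ) → ℝ}
    {k l : WithTop ℕ∞} (hkl : k + 1 ≤ l) (hu : ContDiff ℝ l u) :
    ContDiff ℝ k (pderivIter n i 1 u) :=
  (hu.fderiv_right hkl).clm_apply contDiff_const

theorem insertNth_left_eq_update (i : Fin (m + 1)) (s : Fin m → ℝ) :
    (fun t : ℝ => (i.insertNth t s : Fin (m + 1) → ℝ)) =
      Function.update (i.insertNth (0 : ℝ) s : Fin (m + 1) → ℝ) i :=
  funext fun t => (Fin.update_insertNth (α := fun _ => ℝ) i 0 t s).symm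

theorem deriv_comp_insertNth (hu : Differentiable ℝ u) (s : Fin m → ℝ) (t : ℝ) :
    deriv (fun t => u (i.insertNth t s)) t = pderivIter (m + 1) i 1 u (i.insertNth t s) := by
  have hline : HasDerivAt (fun t : ℝ => (i.insertNth t s : Fin (m + 1) → ℝ)) (Pi.single i 1) t :=
    insertNth_left_eq_update i s ▸ hasDerivAt_update _ i t
  exact ((hu _).hasFDerivAt.comp_hasDerivAt t hline).deriv

theorem deriv_deriv_comp_insertNth (hu : ContDiff ℝ 2 u) (s : Fin m → ℝ) (t : ℝ) :
    deriv (deriv fun t => u (i.insertNth t s)) t = pderivIter (m + 1) i 2 u (i.insertNth t s) := by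
  have hderiv : (deriv fun t => u (i.insertNth t s)) =
      fun t => pderivIter (m + 1) i 1 u (i.insertNth t s) :=
    funext (deriv_comp_insertNth (hu.differentiable two_ne_zero) s)
  rw [hderiv]
  exact deriv_comp_insertNth
    ((contDiff_pderivIter_one one_add_one_eq_two.le hu).differentiable one_ne_zero) s t

theorem isC2Family_insertNth (hu : ContDiff ℝ 2 u)
    (hc : ∀ x, HasCompactSupport fun t => u (Function.update x i t)) :
    IsC2Family fun (s : Fin m → ℝ) t => u (i.insertNth t s) := by
  have hline : Continuous fun p : (Fin m → ℝ) × ℝ => (i.insertNth p.2 p.1 : Fin (m + 1) → ℝ) :=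
    Continuous.finInsertNth (A := fun _ => ℝ) i continuous_snd continuous_fst
  have hu₁ : ContDiff ℝ 1 (pderivIter (m + 1) i 1 u) :=
    contDiff_pderivIter_one one_add_one_eq_two.le hu
  refine ⟨fun s => ?_, fun s => ?_, hu.continuous.comp hline, ?_, ?_⟩
  · exact hu.comp (insertNth_left_eq_update i s ▸ contDiff_update 2 _ i)
  · simpa only [Fin.update_insertNth] using hc (i.insertNth 0 s)
  · simp only [deriv_comp_insertNth (hu.differentiable two_ne_zero)]
    exact hu₁.continuous.comp hline
  · simp only [deriv_deriv_comp_insertNth hu]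
    exact (contDiff_pderivIter_one (zero_add 1).le hu₁).continuous.comp hline

theorem hasSparseTiling_pderivIter (hu : ContDiff ℝ 2 u)
    (hc : ∀ x, HasCompactSupport fun t => u (Function.update x i t)) :
    HasSparseTiling volume (76 ^ 2) (fun x => |pderivIter (m + 1) i 1 u x| ^ 2)
      (fun x => |pderivIter (m + 1) i 2 u x|) (fun x => |u x|)
      {x | u x ≠ 0 ∨ pderivIter (m + 1) i 1 u x ≠ 0} := by
  set e := (MeasurableEquiv.piFinSuccAbove (fun _ : Fin (m + 1) => ℝ) i).trans .prodComm
  have he : MeasurePreserving e volume (volume.prod volume) :=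
    Measure.measurePreserving_swap.comp (volume_preserving_piFinSuccAbove (fun _ => ℝ) i)
  have happly : ∀ x, e x = (i.removeNth x, x i) := fun _ => rfl
  simpa only [HasJetTiling, Function.comp_def, happly, jetSupport, preimage_ofPred_eq,
    mem_ofPred_eq, deriv_comp_insertNth (hu.differentiable two_ne_zero),
    deriv_deriv_comp_insertNth hu, Fin.insertNth_self_removeNth] using
    (hasJetTiling_jetSupport (μ := volume) (isC2Family_insertNth hu hc)).comp_measurableEquiv he

end EuclideanSpace

theorem tsum_indicator_one_le_one {X κ : Type*} {P : κ → Set X} (hP : Pairwise (Disjoint on P))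
    (x : X) : ∑' k, (P k).indicator (fun _ => (1 : ℝ≥0∞)) x ≤ 1 := by
  have hsub : {k | x ∈ P k}.Subsingleton := fun k hk l hl =>
    hP.eq (not_disjoint_iff.2 ⟨x, hk, hl⟩)
  calc ∑' k, (P k).indicator (fun _ => (1 : ℝ≥0∞)) x
      = ∑' k, {k | x ∈ P k}.indicator (fun _ => (1 : ℝ≥0∞)) k := rfl
    _ = {k | x ∈ P k}.encard := by rw [← tsum_subtype, ENNReal.tsum_set_one]
    _ ≤ 1 := by exact_mod_cast encard_le_one_iff_subsingleton.2 hsub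

theorem ofReal_le_mul_tsum_indicator {X κ : Type*} {P : κ → Set X} {f g : κ → ℝ} {C y : ℝ} {x : X}
    (hC : 0 ≤ C) (hf : ∀ k, 0 ≤ f k) (hy : y ≠ 0 → ∃ k, x ∈ P k ∧ y ≤ C * (f k * g k)) :
    ENNReal.ofReal y ≤ ENNReal.ofReal C * ∑' k, (ENNReal.ofReal (f k) * ENNReal.ofReal (g k)) *
      (P k).indicator (fun _ => (1 : ℝ≥0∞)) x := by
  rcases eq_or_ne y 0 with rfl | hy0
  · simp
  obtain ⟨k, hk, hle⟩ := hy hy0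
  calc ENNReal.ofReal y ≤ ENNReal.ofReal (C * (f k * g k)) := ENNReal.ofReal_le_ofReal hle
    _ = ENNReal.ofReal C * ((ENNReal.ofReal (f k) * ENNReal.ofReal (g k)) *
        (P k).indicator (fun _ => (1 : ℝ≥0∞)) x) := by
      rw [ENNReal.ofReal_mul hC, ENNReal.ofReal_mul (hf k), indicator_of_mem hk, mul_one]
    _ ≤ _ := by
      gcongr
      exact ENNReal.le_tsum k

theorem sparse_pointwise_estimate_general :
    ∃ C : ℝ, 0 < C ∧
      ∀ (n : ℕ) (u : (Fin n → ℝ) → ℝ), ContDiff ℝ 2 u →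
        ∀ i : Fin n, (∀ x, HasCompactSupport fun t => u (Function.update x i t)) →
          ∃ (ι : Type) (_ : Countable ι) (P : ι → Set (Fin n → ℝ)),
            (∀ m, MeasurableSet (P m) ∧ 0 < volume (P m) ∧ volume (P m) < ⊤) ∧
            (∀ x, ENNReal.ofReal (|pderivIter n i 1 u x| ^ 2) ≤
              ENNReal.ofReal C *
                ∑' m, (ENNReal.ofReal (⨍ t in P m, |pderivIter n i 2 u t|)
                    * ENNReal.ofReal (⨍ t in P m, |u t|))
                  * (P m).indicator (fun _ => (1 : ℝ≥0∞)) x) ∧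
            (∀ x, ∑' m, (P m).indicator (fun _ => (1 : ℝ≥0∞)) x ≤ 1) := by
  refine ⟨2 * 76 ^ 2, by positivity, fun n u hu i hc => ?_⟩
  obtain _ | m := n
  · exact i.elim0
  have hu₁ : Continuous (pderivIter (m + 1) i 1 u) :=
    (contDiff_pderivIter_one one_add_one_eq_two.le hu).continuous
  obtain ⟨ι, hι, P, hP, hdisj, hcover⟩ :=
    (hasSparseTiling_pderivIter hu hc).exists_pairwise_disjoint_cover (hu₁.abs.pow 2)
      (fun _ => by positivity) (fun x hx => .inr (by simpa using hx))
  exact ⟨ι, hι, P, hP, fun x => ofReal_le_mul_tsum_indicator (by norm_num)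
    (fun _ => integral_nonneg fun _ => abs_nonneg _) (hcover x), tsum_indicator_one_le_one hdisj⟩

/-- Sparse pointwise domination of `|∂u/∂x_i|²` by a sparse family with overlap
at most `5`, for `u ∈ C²_c(ℝⁿ)`; the constant `C` depends only on `n`. -/
theorem sparse_pointwise_estimate (n : ℕ) :
    ∃ C : ℝ, 0 < C ∧
      ∀ (u : (Fin n → ℝ) → ℝ), ContDiff ℝ 2 u → HasCompactSupport u →
        ∀ i : Fin n,
          ∃ (ι : Type) (_ : Countable ι) (P : ι → Set (Fin n → ℝ)),
            (∀ m, MeasurableSet (P m) ∧ 0 < volume (P m) ∧ volume (P m) < ⊤) ∧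
            (∀ x, ENNReal.ofReal (|pderivIter n i 1 u x| ^ 2) ≤
              ENNReal.ofReal C *
                ∑' m, (ENNReal.ofReal (⨍ t in P m, |pderivIter n i 2 u t|)
                    * ENNReal.ofReal (⨍ t in P m, |u t|))
                  * (P m).indicator (fun _ => (1 : ℝ≥0∞)) x) ∧
            (∀ x, ∑' m, (P m).indicator (fun _ => (1 : ℝ≥0∞)) x ≤ 5) := by
  obtain ⟨C, hC, h⟩ := sparse_pointwise_estimate_general
  refine ⟨C, hC, fun u hu huc i => ?_⟩
  obtain ⟨ι, hι, P, hP, hsum, hoverlap⟩ := h n u hu i fun x =>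
    huc.comp_isClosedEmbedding (isClosedEmbedding_update x i)
  exact ⟨ι, hι, P, hP, hsum, fun x => (hoverlap x).trans (by norm_num)⟩
end

section
/- There are two positive constants C and K depending only on the dimension n such that for every u : ℝⁿ → ℝ of class C² with compact support, there exists a countable family 𝒫 = (P_m) of measurable subsets of ℝⁿ, each of finite positive Lebesgue measure, such that for every x ∈ ℝⁿ, |∇u(x)|² ≤ C · (T_𝒫 |∇²u|)(x) · (T_𝒫 |u|)(x) and Σ_m χ_{P_m}(x) ≤ K, where |∇u|(x) = Σ_{i=1}^n |∂u/∂x_i(x)| and |∇²u|(x) = Σ_{i,j=1}^n |∂²u/∂x_i∂x_j(x)|. (One may take K = 5n.) -/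
open MeasureTheory ENNReal Set

/-- The first partial derivative of `u : ℝⁿ → ℝ` in the `i`-th coordinate
direction. -/
noncomputable def pderiv1 (n : ℕ) (i : Fin n)
    (u : (Fin n → ℝ) → ℝ) : (Fin n → ℝ) → ℝ :=
  fun x => fderiv ℝ u x (Pi.single i 1)

/-- `|∇u|(x) := Σ_i |∂u/∂x_i(x)|`. -/
noncomputable def grad1Abs (n : ℕ) (u : (Fin n → ℝ) → ℝ) : (Fin n → ℝ) → ℝ :=
  fun x => ∑ i : Fin n, |pderiv1 n i u x|

/-- `|∇²u|(x) := Σ_{i,j} |∂²u/∂x_i∂x_j(x)|`. -/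
noncomputable def grad2Abs (n : ℕ) (u : (Fin n → ℝ) → ℝ) : (Fin n → ℝ) → ℝ :=
  fun x => ∑ i : Fin n, ∑ j : Fin n, |pderiv1 n i (pderiv1 n j u) x|

/-!
Fix a coordinate `i` and a dyadic level `r = 2 ^ k`. On a line of direction `i`, let `I` be a
component of the set where `|∂ᵢu|` is comparable to `r` and which contains a point well inside
this range. From that point to an endpoint of `I`, `∂ᵢu` changes by a multiple of `r`, so the mean
of `|∇²u|` over `I` is at least of order `r / |I|`; and `u` has slope at least of order `r` on `I`,
so the mean of `|u|` is at least of order `r * |I|`. The length of `I` cancels in the product.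
Since `∂ᵢu` is uniformly continuous, both bounds persist when `I` is thickened to a thin tube, and
countably many such tubes, over the cells of a fine grid, cover the level. The tubes of one level
are disjoint, and a point meets tubes of at most five levels for each `i`.
-/

open Bornology BoxIntegral.unitPartition Filter Topology

lemma exists_connectedComponentIn_eq_Ioo {U : Set ℝ} (hU : IsOpen U) (hUb : IsBounded U) {t : ℝ}
    (ht : t ∈ U) : ∃ a b, connectedComponentIn U t = Ioo a b ∧ a ∉ U := by
  set K := connectedComponentIn U t
  have hKU : K ⊆ U := connectedComponentIn_subset U t
  have htK : t ∈ K := mem_connectedComponentIn ht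
  have hKb : IsBounded K := hUb.subset hKU
  have hK : K = Ioo (sInf K) (sSup K) := by
    refine Subset.antisymm ?_ (IsConnected.Ioo_csInf_csSup_subset
      ⟨⟨t, htK⟩, isPreconnected_connectedComponentIn⟩ hKb.bddBelow hKb.bddAbove)
    rw [← interior_Icc, hU.connectedComponentIn.subset_interior_iff]
    exact subset_Icc_csInf_csSup hKb.bddBelow hKb.bddAbove
  refine ⟨sInf K, sSup K, hK, fun ha => ?_⟩
  have htI : t ∈ Ioo (sInf K) (sSup K) := hK ▸ htK
  have hIco : Ico (sInf K) (sSup K) ⊆ K :=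
    isPreconnected_Ico.subset_connectedComponentIn (Ioo_subset_Ico_self htI) <| by
      rw [← Ioo_insert_left (htI.1.trans htI.2), ← hK]
      exact insert_subset ha hKU
  have ha_mem : sInf K ∈ Ioo (sInf K) (sSup K) :=
    hK.subset (hIco (left_mem_Ico.2 (htI.1.trans htI.2)))
  exact left_notMem_Ioo ha_mem

lemma mul_sq_div_four_le_integral_abs {f f' : ℝ → ℝ} {a b l : ℝ} (hab : a < b)
    (hf : ∀ t ∈ Icc a b, HasDerivAt f (f' t) t) (hl : ∀ t ∈ Ioo a b, l ≤ |f' t|) :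
    l * (b - a) ^ 2 / 4 ≤ ∫ t in a..b, |f t| := by
  obtain ⟨h, hh⟩ : ∃ h, h = (b - a) / 2 := ⟨_, rfl⟩
  have h_pos : 0 < h := by linarith
  obtain rfl : b = a + h + h := by linarith
  have hfc : ContinuousOn (fun t => |f t|) (Icc a (a + h + h)) :=
    ContinuousOn.abs fun t ht => (hf t ht).continuousAt.continuousWithinAt
  have h_left : IntervalIntegrable (fun t => |f t|) volume a (a + h) :=
    (hfc.mono (Icc_subset_Icc_right (by linarith))).intervalIntegrable_of_Icc (by linarith)
  have h_right : IntervalIntegrable (fun t => |f t|) volume (a + h) (a + h + h) :=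
    (hfc.mono (Icc_subset_Icc_left (by linarith))).intervalIntegrable_of_Icc (by linarith)
  have h_shift : IntervalIntegrable (fun t => |f (t + h)|) volume a (a + h) := by
    simpa using h_right.comp_add_right h
  have h_increment : ∀ t ∈ Ioo a (a + h), l * h ≤ |f t| + |f (t + h)| := by
    intro t ht
    obtain ⟨c, hc, hslope⟩ := exists_hasDerivAt_eq_slope f f' (show t < t + h by linarith)
      (fun s hs => (hf s ⟨ht.1.le.trans hs.1, by linarith [hs.2, ht.2]⟩).continuousAt
        |>.continuousWithinAt)
      (fun s hs => hf s ⟨by linarith [hs.1, ht.1], by linarith [hs.2, ht.2]⟩)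
    calc l * h ≤ |f' c| * h := by
          gcongr
          exact hl c ⟨ht.1.trans hc.1, by linarith [hc.2, ht.2]⟩
      _ = |f (t + h) - f t| := by
          rw [hslope, add_sub_cancel_left, abs_div, abs_of_pos h_pos, div_mul_cancel₀ _ h_pos.ne']
      _ ≤ |f t| + |f (t + h)| := by
          rw [add_comm |f t|]
          exact abs_sub _ _
  calc l * (a + h + h - a) ^ 2 / 4 = ∫ _ in a..(a + h), l * h := by
        rw [intervalIntegral.integral_const, smul_eq_mul]
        ring
    _ ≤ ∫ t in a..(a + h), (|f t| + |f (t + h)|) :=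
        intervalIntegral.integral_mono_on_of_le_Ioo (by linarith) (by simp) (h_left.add h_shift)
          h_increment
    _ = ∫ t in a..(a + h + h), |f t| := by
        rw [intervalIntegral.integral_add h_left h_shift,
          intervalIntegral.integral_comp_add_right (fun t => |f t|) h,
          intervalIntegral.integral_add_adjacent_intervals h_left h_right]

section Tube

variable {m : ℕ} {i : Fin (m + 1)}

/-- The line in the direction of the `i`-th coordinate whose other coordinates are `y`. -/
def coordLine (i : Fin (m + 1)) (y : Fin m → ℝ) (t : ℝ) : Fin (m + 1) → ℝ :=
  i.insertNth t y

lemma coordLine_removeNth (i : Fin (m + 1)) (x : Fin (m + 1) → ℝ) :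
    coordLine i (i.removeNth x) (x i) = x :=
  Fin.insertNth_self_removeNth i x

lemma dist_coordLine_coordLine (y z : Fin m → ℝ) (t : ℝ) :
    dist (coordLine i y t) (coordLine i z t) = dist y z := by
  simp [coordLine, Fin.dist_insertNth_insertNth]

lemma continuous_coordLine (y : Fin m → ℝ) : Continuous (coordLine i y) :=
  Continuous.finInsertNth (A := fun _ => ℝ) i continuous_id continuous_const

lemma hasDerivAt_coordLine (y : Fin m → ℝ) (t : ℝ) :
    HasDerivAt (coordLine i y) (Pi.single i 1) t := by
  have h : Function.update (coordLine i y 0) i = coordLine i y :=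
    funext fun s => Fin.update_insertNth (α := fun _ => ℝ) i 0 s y
  exact h ▸ hasDerivAt_update (coordLine i y 0) i t

/-- The product of `I`, placed in the `i`-th coordinate, and `Q`, placed in the other ones. -/
def tube (i : Fin (m + 1)) (I : Set ℝ) (Q : Set (Fin m → ℝ)) : Set (Fin (m + 1) → ℝ) :=
  {x | x i ∈ I ∧ i.removeNth x ∈ Q}

variable {I : Set ℝ} {Q : Set (Fin m → ℝ)}

lemma coordLine_mem_tube {y : Fin m → ℝ} {t : ℝ} :
    coordLine i y t ∈ tube i I Q ↔ t ∈ I ∧ y ∈ Q := by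
  simp [coordLine, tube]

lemma tube_eq_preimage_prod :
    tube i I Q = MeasurableEquiv.piFinSuccAbove (fun _ => ℝ) i ⁻¹' (I ×ˢ Q) :=
  rfl

lemma measurableSet_tube (hI : MeasurableSet I) (hQ : MeasurableSet Q) :
    MeasurableSet (tube i I Q) :=
  (MeasurableEquiv.piFinSuccAbove (fun _ => ℝ) i).measurable (hI.prod hQ)

lemma volume_tube : volume (tube i I Q) = volume I * volume Q := by
  rw [tube_eq_preimage_prod,
    (volume_preserving_piFinSuccAbove (fun _ => ℝ) i).measure_preimage_equiv,
    Measure.volume_eq_prod, Measure.prod_prod]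

lemma isBounded_tube (hI : IsBounded I) (hQ : IsBounded Q) : IsBounded (tube i I Q) := by
  refine forall_isBounded_image_eval_iff.1 (i.forall_iff_succAbove.2 ⟨?_, fun j => ?_⟩)
  · exact hI.subset (image_subset_iff.2 fun x hx => hx.1)
  · exact (hQ.image_eval j).subset (image_subset_iff.2 fun x hx => ⟨_, hx.2, rfl⟩)

lemma measurePreserving_restrict_tube :
    MeasurePreserving (MeasurableEquiv.piFinSuccAbove (fun _ => ℝ) i)
      (volume.restrict (tube i I Q)) ((volume.restrict I).prod (volume.restrict Q)) := by
  rw [Measure.prod_restrict]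
  exact (volume_preserving_piFinSuccAbove (fun _ => ℝ) i).restrict_preimage_emb
    (MeasurableEquiv.measurableEmbedding _) (I ×ˢ Q)

section Fubini

variable {E : Type*} [NormedAddCommGroup E] {f : (Fin (m + 1) → ℝ) → E}

lemma integrable_coordLine_prod (hf : IntegrableOn f (tube i I Q)) :
    Integrable (fun p : ℝ × (Fin m → ℝ) => f (coordLine i p.2 p.1))
      ((volume.restrict I).prod (volume.restrict Q)) := by
  rw [← measurePreserving_restrict_tube.integrable_comp_emb
    (MeasurableEquiv.measurableEmbedding _)]
  exact hf.congr (.of_forall fun x => congrArg f (coordLine_removeNth i x).symm)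

lemma setIntegral_tube [NormedSpace ℝ E] (hf : IntegrableOn f (tube i I Q)) :
    ∫ x in tube i I Q, f x = ∫ y in Q, ∫ t in I, f (coordLine i y t) := by
  rw [← integral_prod_symm _ (integrable_coordLine_prod hf),
    ← (measurePreserving_restrict_tube (i := i)).integral_comp']
  exact integral_congr_ae (.of_forall fun x => congrArg f (coordLine_removeNth i x).symm)

end Fubini

lemma div_le_average_tube {f : (Fin (m + 1) → ℝ) → ℝ} {c : ℝ} (hQ : MeasurableSet Q)
    (hQ0 : volume Q ≠ 0) (hQ_top : volume Q ≠ ⊤) (hf : IntegrableOn f (tube i I Q))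
    (hc : ∀ y ∈ Q, c ≤ ∫ t in I, f (coordLine i y t)) :
    c / volume.real I ≤ ⨍ x in tube i I Q, f x := by
  have hQ_pos : 0 < volume.real Q := ENNReal.toReal_pos hQ0 hQ_top
  have h_integral : c * volume.real Q ≤ ∫ x in tube i I Q, f x := by
    rw [setIntegral_tube hf]
    exact setIntegral_ge_of_const_le_real hQ hQ_top hc
      (integrable_coordLine_prod hf).integral_prod_right
  have h_volume : volume.real (tube i I Q) = volume.real I * volume.real Q := by
    rw [Measure.real, volume_tube, ENNReal.toReal_mul]
    rfl
  calc c / volume.real I = c * volume.real Q / volume.real (tube i I Q) := by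
        rw [h_volume, mul_div_mul_right _ _ hQ_pos.ne']
    _ ≤ (∫ x in tube i I Q, f x) / volume.real (tube i I Q) := by gcongr
    _ = ⨍ x in tube i I Q, f x := by rw [setAverage_eq, smul_eq_mul, inv_mul_eq_div]

end Tube

section PartialDerivatives

variable {n : ℕ} {u : (Fin n → ℝ) → ℝ}

lemma contDiff_pderiv1 (i : Fin n) {k l : WithTop ℕ∞} (hu : ContDiff ℝ k u) (hl : l + 1 ≤ k) :
    ContDiff ℝ l (pderiv1 n i u) :=
  (hu.fderiv_right hl).clm_apply contDiff_const

lemma continuous_grad2Abs (hu : ContDiff ℝ 2 u) : Continuous (grad2Abs n u) :=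
  continuous_finsetSum _ fun i _ => continuous_finsetSum _ fun j _ =>
    (contDiff_pderiv1 (l := 0) i (contDiff_pderiv1 (l := 1) j hu (by norm_num))
      (by norm_num)).continuous.abs

lemma abs_pderiv1_pderiv1_le_grad2Abs (i j : Fin n) (u : (Fin n → ℝ) → ℝ) (x : Fin n → ℝ) :
    |pderiv1 n i (pderiv1 n j u) x| ≤ grad2Abs n u x :=
  calc |pderiv1 n i (pderiv1 n j u) x| ≤ ∑ j, |pderiv1 n i (pderiv1 n j u) x| :=
        Finset.single_le_sum (f := fun j => |pderiv1 n i (pderiv1 n j u) x|)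
          (fun _ _ => abs_nonneg _) (Finset.mem_univ j)
    _ ≤ grad2Abs n u x :=
        Finset.single_le_sum (f := fun i => ∑ j, |pderiv1 n i (pderiv1 n j u) x|)
          (fun _ _ => Finset.sum_nonneg fun _ _ => abs_nonneg _) (Finset.mem_univ i)

lemma exists_grad1Abs_le_mul [NeZero n] (u : (Fin n → ℝ) → ℝ) (x : Fin n → ℝ) :
    ∃ i, grad1Abs n u x ≤ n * |pderiv1 n i u x| := by
  obtain ⟨i, -, hi⟩ :=
    Finset.exists_max_image Finset.univ (fun i => |pderiv1 n i u x|) Finset.univ_nonempty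
  exact ⟨i, by simpa [grad1Abs] using Finset.sum_le_card_nsmul _ _ _ hi⟩

lemma hasDerivAt_comp_coordLine {m : ℕ} {i : Fin (m + 1)} {v : (Fin (m + 1) → ℝ) → ℝ}
    {y : Fin m → ℝ} {t : ℝ} (hv : DifferentiableAt ℝ v (coordLine i y t)) :
    HasDerivAt (fun t => v (coordLine i y t)) (pderiv1 (m + 1) i v (coordLine i y t)) t :=
  hv.hasFDerivAt.comp_hasDerivAt t (hasDerivAt_coordLine y t)

end PartialDerivatives

section TubeEstimates

variable {m : ℕ} {i : Fin (m + 1)} {u : (Fin (m + 1) → ℝ) → ℝ}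

lemma abs_pderiv1_sub_le_setIntegral_grad2Abs (hu : ContDiff ℝ 2 u) (y : Fin m → ℝ) {a b t : ℝ}
    (ht : t ∈ Ioo a b) :
    |pderiv1 (m + 1) i u (coordLine i y t) - pderiv1 (m + 1) i u (coordLine i y a)| ≤
      ∫ s in Ioo a b, grad2Abs (m + 1) u (coordLine i y s) := by
  have h_deriv (s : ℝ) := hasDerivAt_comp_coordLine (y := y) (t := s)
    ((contDiff_pderiv1 i hu (by norm_num)).differentiable one_ne_zero (coordLine i y s))
  have h_cont : Continuous fun s => grad2Abs (m + 1) u (coordLine i y s) :=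
    (continuous_grad2Abs hu).comp (continuous_coordLine y)
  have h_nonneg (s : ℝ) : 0 ≤ grad2Abs (m + 1) u (coordLine i y s) :=
    (abs_nonneg _).trans (abs_pderiv1_pderiv1_le_grad2Abs i i u _)
  calc |pderiv1 (m + 1) i u (coordLine i y t) - pderiv1 (m + 1) i u (coordLine i y a)|
      ≤ ∫ s in a..t, grad2Abs (m + 1) u (coordLine i y s) :=
        norm_sub_le_integral_of_norm_deriv_le_of_le ht.1.le
          (fun s _ => (h_deriv s).continuousAt.continuousWithinAt)
          (fun s _ => (h_deriv s).differentiableAt.differentiableWithinAt)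
          (.of_forall fun s _ => (h_deriv s).deriv ▸ abs_pderiv1_pderiv1_le_grad2Abs i i u _)
          (h_cont.intervalIntegrable _ _)
    _ ≤ ∫ s in a..b, grad2Abs (m + 1) u (coordLine i y s) :=
        intervalIntegral.integral_mono_interval le_rfl ht.1.le ht.2.le
          (.of_forall h_nonneg) (h_cont.intervalIntegrable _ _)
    _ = ∫ s in Ioo a b, grad2Abs (m + 1) u (coordLine i y s) := by
        rw [intervalIntegral.integral_of_le (ht.1.trans ht.2).le, integral_Ioc_eq_integral_Ioo]

theorem mul_le_average_grad2Abs_mul_average_abs (hu : ContDiff ℝ 2 u) {a b t δ l : ℝ}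
    {Q : Set (Fin m → ℝ)} (hQ : MeasurableSet Q) (hQ0 : volume Q ≠ 0) (hQb : IsBounded Q)
    (ht : t ∈ Ioo a b) (hδ0 : 0 ≤ δ) (hl0 : 0 ≤ l)
    (hδ : ∀ y ∈ Q,
      δ ≤ |pderiv1 (m + 1) i u (coordLine i y t) - pderiv1 (m + 1) i u (coordLine i y a)|)
    (hl : ∀ x ∈ tube i (Ioo a b) Q, l ≤ |pderiv1 (m + 1) i u x|) :
    δ * l / 4 ≤
      (⨍ x in tube i (Ioo a b) Q, grad2Abs (m + 1) u x) * ⨍ x in tube i (Ioo a b) Q, |u x| := by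
  have hab : a < b := ht.1.trans ht.2
  have h_integrable {f : (Fin (m + 1) → ℝ) → ℝ} (hf : Continuous f) :
      IntegrableOn f (tube i (Ioo a b) Q) :=
    (hf.continuousOn.integrableOn_compact
      (isBounded_tube (Metric.isBounded_Ioo a b) hQb).isCompact_closure).mono_set subset_closure
  have h_grad2 : δ / (b - a) ≤ ⨍ x in tube i (Ioo a b) Q, grad2Abs (m + 1) u x := by
    rw [← Real.volume_real_Ioo_of_le hab.le]
    exact div_le_average_tube hQ hQ0 hQb.measure_lt_top.ne (h_integrable (continuous_grad2Abs hu))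
      fun y hy => (hδ y hy).trans (abs_pderiv1_sub_le_setIntegral_grad2Abs hu y ht)
  have h_abs : l * (b - a) ^ 2 / 4 / (b - a) ≤ ⨍ x in tube i (Ioo a b) Q, |u x| := by
    rw [← Real.volume_real_Ioo_of_le hab.le]
    refine div_le_average_tube hQ hQ0 hQb.measure_lt_top.ne (h_integrable hu.continuous.abs)
      fun y hy => ?_
    rw [← integral_Ioc_eq_integral_Ioo, ← intervalIntegral.integral_of_le hab.le,
      Real.volume_real_Ioo_of_le hab.le]
    exact mul_sq_div_four_le_integral_abs hab
      (fun s _ => hasDerivAt_comp_coordLine (hu.differentiable two_ne_zero _))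
      fun s hs => hl _ (coordLine_mem_tube.2 ⟨hs, hy⟩)
  have hba : 0 < b - a := sub_pos.2 hab
  calc δ * l / 4 = δ / (b - a) * (l * (b - a) ^ 2 / 4 / (b - a)) := by field_simp
    _ ≤ _ := mul_le_mul h_grad2 h_abs (by positivity)
        ((by positivity : 0 ≤ δ / (b - a)).trans h_grad2)

end TubeEstimates

section BandTubes

variable {m N : ℕ} [NeZero N] {i : Fin (m + 1)} {g : (Fin (m + 1) → ℝ) → ℝ} {r : ℝ}
  {ν : Fin m → ℤ} {y : Fin m → ℝ}

lemma dist_tag_le (hy : y ∈ box N ν) : dist y (tag N ν) ≤ 1 / N :=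
  (Metric.dist_le_diam_of_mem isCompact_Icc.isBounded
    (BoxIntegral.Box.coe_subset_Icc hy) (BoxIntegral.Box.coe_subset_Icc (tag_mem N ν))).trans
    (diam_boxIcc N ν)

/-- The parameters of the line through `y` in direction `i` at which `|g|` has order `r`. -/
def lineBand (g : (Fin (m + 1) → ℝ) → ℝ) (i : Fin (m + 1)) (r : ℝ) (y : Fin m → ℝ) : Set ℝ :=
  {t | |g (coordLine i y t)| ∈ Ioo (r / 2) (4 * r)}

lemma isOpen_lineBand (hg : Continuous g) : IsOpen (lineBand g i r y) :=
  isOpen_Ioo.preimage (hg.comp (continuous_coordLine y)).abs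

lemma isBounded_lineBand (hg : Tendsto g (cocompact _) (𝓝 0)) (hr : 0 < r) :
    IsBounded (lineBand g i r y) := by
  have h_small : ∀ᶠ x in cobounded (Fin (m + 1) → ℝ), |g x| < r / 2 := by
    rw [Metric.cobounded_eq_cocompact]
    exact hg.abs.eventually_lt_const (by simpa using half_pos hr)
  have h_bounded : IsBounded {x | r / 2 < |g x|} :=
    isBounded_def.2 (h_small.mono fun x hx => hx.not_gt)
  exact (h_bounded.image_eval i).subset
    fun t ht => ⟨coordLine i y t, ht.1, Fin.insertNth_apply_same (α := fun _ => ℝ) i t y⟩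

/-- The tubes of direction `i` over the cells of the grid of mesh `1 / N` whose axes are the
components of the set where `|g|` has order `r`. The lines are those through the tags of the
cells, and only components on which `|g|` comes well inside the range are used, so that `g`
varies by a multiple of `r` on each of them. -/
def bandTubes (g : (Fin (m + 1) → ℝ) → ℝ) (i : Fin (m + 1)) (r : ℝ) (N : ℕ) [NeZero N] :
    Set (Set (Fin (m + 1) → ℝ)) :=
  {P | ∃ ν t, |g (coordLine i (tag N ν) t)| ∈ Icc (7 / 8 * r) (3 * r) ∧
    P = tube i (connectedComponentIn (lineBand g i r (tag N ν)) t) (box N ν)}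

lemma pairwiseDisjoint_bandTubes : (bandTubes g i r N).PairwiseDisjoint id := by
  rintro _ ⟨ν, s, -, rfl⟩ _ ⟨κ, t, -, rfl⟩ hne
  refine disjoint_left.2 fun x hxs hxt => hne ?_
  obtain rfl : ν = κ := (mem_box_iff_index.1 hxs.2).symm.trans (mem_box_iff_index.1 hxt.2)
  rw [connectedComponentIn_eq hxs.1, connectedComponentIn_eq hxt.1]

lemma exists_eq_tube_Ioo_of_mem_bandTubes (hg : Continuous g)
    (hg0 : Tendsto g (cocompact _) (𝓝 0)) (hr : 0 < r) {P : Set (Fin (m + 1) → ℝ)}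
    (hP : P ∈ bandTubes g i r N) :
    ∃ ν a b, ∃ t ∈ Ioo a b, P = tube i (Ioo a b) (box N ν) ∧
      |g (coordLine i (tag N ν) t)| ∈ Icc (7 / 8 * r) (3 * r) ∧
      Ioo a b ⊆ lineBand g i r (tag N ν) ∧ a ∉ lineBand g i r (tag N ν) := by
  obtain ⟨ν, t, ht, rfl⟩ := hP
  have ht_band : t ∈ lineBand g i r (tag N ν) := ⟨by linarith [ht.1], by linarith [ht.2]⟩
  obtain ⟨a, b, hab, ha⟩ :=
    exists_connectedComponentIn_eq_Ioo (isOpen_lineBand hg) (isBounded_lineBand hg0 hr) ht_band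
  refine ⟨ν, a, b, t, hab ▸ mem_connectedComponentIn ht_band, by rw [hab], ht, ?_, ha⟩
  exact hab ▸ connectedComponentIn_subset _ t

lemma measurableSet_of_mem_bandTubes (hg : Continuous g) {P : Set (Fin (m + 1) → ℝ)}
    (hP : P ∈ bandTubes g i r N) : MeasurableSet P := by
  obtain ⟨ν, t, -, rfl⟩ := hP
  exact measurableSet_tube (isOpen_lineBand hg).connectedComponentIn.measurableSet
    (box N ν).measurableSet_coe

lemma volume_pos_of_mem_bandTubes (hg : Continuous g) (hg0 : Tendsto g (cocompact _) (𝓝 0))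
    (hr : 0 < r) {P : Set (Fin (m + 1) → ℝ)} (hP : P ∈ bandTubes g i r N) : 0 < volume P := by
  obtain ⟨ν, a, b, t, ht, rfl, -⟩ := exists_eq_tube_Ioo_of_mem_bandTubes hg hg0 hr hP
  rw [volume_tube]
  exact ENNReal.mul_pos (by simpa using ht.1.trans ht.2) (by simp [volume_box])

lemma volume_lt_top_of_mem_bandTubes (hg0 : Tendsto g (cocompact _) (𝓝 0)) (hr : 0 < r)
    {P : Set (Fin (m + 1) → ℝ)} (hP : P ∈ bandTubes g i r N) : volume P < ⊤ := by
  obtain ⟨ν, t, -, rfl⟩ := hP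
  exact (isBounded_tube ((isBounded_lineBand hg0 hr).subset (connectedComponentIn_subset _ t))
    (box N ν).isBounded).measure_lt_top

variable (hN : ∀ x y, dist x y ≤ 1 / (N : ℝ) → |g x - g y| < r / 16)
include hN

lemma abs_abs_sub_abs_coordLine_tag_lt (hy : y ∈ box N ν) (t : ℝ) :
    |(|g (coordLine i y t)| - |g (coordLine i (tag N ν) t)|)| < r / 16 :=
  (abs_abs_sub_abs_le _ _).trans_lt <|
    hN _ _ ((dist_coordLine_coordLine y (tag N ν) t).trans_le (dist_tag_le hy))

lemma abs_coordLine_mem_Ioo_of_mem_lineBand (hy : y ∈ box N ν) {t : ℝ}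
    (ht : t ∈ lineBand g i r (tag N ν)) : |g (coordLine i y t)| ∈ Ioo (r / 4) (8 * r) := by
  have h := abs_lt.1 (abs_abs_sub_abs_coordLine_tag_lt (i := i) hN hy t)
  exact ⟨by linarith [ht.1], by linarith [ht.2]⟩

lemma div_four_le_abs_sub_of_notMem_lineBand (hy : y ∈ box N ν) {t a : ℝ}
    (ht : |g (coordLine i (tag N ν) t)| ∈ Icc (7 / 8 * r) (3 * r))
    (ha : a ∉ lineBand g i r (tag N ν)) :
    r / 4 ≤ |g (coordLine i y t) - g (coordLine i y a)| := by
  have h_t := abs_lt.1 (abs_abs_sub_abs_coordLine_tag_lt (i := i) hN hy t)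
  have h_a := abs_lt.1 (abs_abs_sub_abs_coordLine_tag_lt (i := i) hN hy a)
  refine le_trans ?_ (abs_abs_sub_abs_le _ _)
  rcases not_and_or.1 ha with ha | ha
  · exact le_abs.2 (.inl (by linarith [ht.1]))
  · exact le_abs.2 (.inr (by linarith [ht.2]))

lemma exists_mem_bandTubes {x : Fin (m + 1) → ℝ} (hx : |g x| ∈ Icc r (2 * r)) :
    ∃ P ∈ bandTubes g i r N, x ∈ P := by
  have hx_box : i.removeNth x ∈ box N (index N (i.removeNth x)) := mem_box_iff_index.2 rfl
  have h := abs_lt.1 (abs_abs_sub_abs_coordLine_tag_lt (i := i) hN hx_box (x i))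
  rw [coordLine_removeNth] at h
  have hx_tag : |g (coordLine i (tag N (index N (i.removeNth x))) (x i))| ∈
      Icc (7 / 8 * r) (3 * r) := ⟨by linarith [hx.1], by linarith [hx.2]⟩
  refine ⟨_, ⟨_, x i, hx_tag, rfl⟩, mem_connectedComponentIn ?_, hx_box⟩
  exact ⟨by linarith [hx_tag.1], by linarith [hx_tag.2]⟩

end BandTubes

/-- A family of disjoint sets which covers the points where `|∂u/∂xᵢ|` lies between `r` and
`2 * r`, consists of points where it has order `r`, and on whose members the square of `r` is
controlled by the product of the averages of `|∇²u|` and `|u|`. -/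
structure IsBandFamily {n : ℕ} (u : (Fin n → ℝ) → ℝ) (i : Fin n) (r : ℝ)
    (S : Set (Set (Fin n → ℝ))) : Prop where
  pairwiseDisjoint : S.PairwiseDisjoint id
  measurableSet : ∀ P ∈ S, MeasurableSet P
  volume_pos : ∀ P ∈ S, 0 < volume P
  volume_lt_top : ∀ P ∈ S, volume P < ⊤
  abs_pderiv1_mem : ∀ P ∈ S, ∀ x ∈ P, |pderiv1 n i u x| ∈ Ioo (r / 4) (8 * r)
  sq_le : ∀ P ∈ S, r ^ 2 ≤ 64 * ((⨍ x in P, grad2Abs n u x) * ⨍ x in P, |u x|)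
  exists_mem : ∀ x, |pderiv1 n i u x| ∈ Icc r (2 * r) → ∃ P ∈ S, x ∈ P

lemma IsBandFamily.countable {n : ℕ} {u : (Fin n → ℝ) → ℝ} {i : Fin n} {r : ℝ}
    {S : Set (Set (Fin n → ℝ))} (hS : IsBandFamily u i r S) : S.Countable := by
  have h := Measure.countable_meas_pos_of_disjoint_iUnion (μ := volume)
    (As := fun P : S => (P : Set (Fin n → ℝ))) (fun P => hS.measurableSet P P.2)
    fun P Q hPQ => hS.pairwiseDisjoint P.2 Q.2 (Subtype.coe_ne_coe.2 hPQ)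
  rwa [show {P : S | 0 < volume (P : Set (Fin n → ℝ))} = univ from
    eq_univ_of_forall fun P => hS.volume_pos P P.2,
    countable_univ_iff, countable_coe_iff] at h

lemma isBandFamily_bandTubes {m N : ℕ} [NeZero N] {i : Fin (m + 1)}
    {u : (Fin (m + 1) → ℝ) → ℝ} {r : ℝ} (hu : ContDiff ℝ 2 u)
    (hu0 : Tendsto (pderiv1 (m + 1) i u) (cocompact _) (𝓝 0)) (hr : 0 < r)
    (hN : ∀ x y, dist x y ≤ 1 / (N : ℝ) →
      |pderiv1 (m + 1) i u x - pderiv1 (m + 1) i u y| < r / 16) :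
    IsBandFamily u i r (bandTubes (pderiv1 (m + 1) i u) i r N) := by
  have h_cont : Continuous (pderiv1 (m + 1) i u) :=
    (contDiff_pderiv1 (l := 1) i hu (by norm_num)).continuous
  have h_mem {ν : Fin m → ℤ} {a b : ℝ}
      (hab : Ioo a b ⊆ lineBand (pderiv1 (m + 1) i u) i r (tag N ν)) (x : Fin (m + 1) → ℝ)
      (hx : x ∈ tube i (Ioo a b) (box N ν)) : |pderiv1 (m + 1) i u x| ∈ Ioo (r / 4) (8 * r) :=
    coordLine_removeNth i x ▸ abs_coordLine_mem_Ioo_of_mem_lineBand hN hx.2 (hab hx.1)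
  refine ⟨pairwiseDisjoint_bandTubes, fun P => measurableSet_of_mem_bandTubes h_cont,
    fun P => volume_pos_of_mem_bandTubes h_cont hu0 hr,
    fun P => volume_lt_top_of_mem_bandTubes hu0 hr,
    fun P hP => ?_, fun P hP => ?_, fun x => exists_mem_bandTubes hN⟩
  · obtain ⟨ν, a, b, t, -, rfl, -, hab, -⟩ :=
      exists_eq_tube_Ioo_of_mem_bandTubes h_cont hu0 hr hP
    exact h_mem hab
  · obtain ⟨ν, a, b, t, ht, rfl, ht_mem, hab, ha⟩ :=
      exists_eq_tube_Ioo_of_mem_bandTubes h_cont hu0 hr hP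
    have h := mul_le_average_grad2Abs_mul_average_abs (δ := r / 4) (l := r / 4) hu
      (box N ν).measurableSet_coe (by simp [volume_box]) (box N ν).isBounded ht
      (by positivity) (by positivity)
      (fun y hy => div_four_le_abs_sub_of_notMem_lineBand hN hy ht_mem ha)
      fun x hx => (h_mem hab x hx).1.le
    linarith

theorem exists_isBandFamily {n : ℕ} {u : (Fin n → ℝ) → ℝ} {i : Fin n} {r : ℝ}
    (hu : ContDiff ℝ 2 u) (hu0 : Tendsto (pderiv1 n i u) (cocompact _) (𝓝 0)) (hr : 0 < r) :
    ∃ S, IsBandFamily u i r S := by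
  obtain _ | m := n
  · exact i.elim0
  obtain ⟨ε, hε, h_osc⟩ := Metric.uniformContinuous_iff.1
    ((contDiff_pderiv1 (l := 1) i hu (by norm_num)).continuous
      |>.uniformContinuous_of_tendsto_cocompact hu0) (r / 16) (by positivity)
  obtain ⟨N, hN⟩ := exists_nat_one_div_lt hε
  exact ⟨_, isBandFamily_bandTubes (N := N + 1) hu hu0 hr fun x y hxy =>
    h_osc (hxy.trans_lt (by simpa using hN))⟩

section AveragingOperator

variable {α ι : Type*} {P : ι → Set α} {x : α}

/-- The averaging operator `T_𝒫` of a family `P` of sets, applied to `f` and evaluated at `x`.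
As it is only used for nonnegative `f`, the series is taken in `ℝ≥0∞`; the contribution of
a set on which `f` has a negative average is truncated to `0`. -/
noncomputable def averagingOperator [MeasureSpace α] (P : ι → Set α) (f : α → ℝ) (x : α) : ℝ≥0∞ :=
  ∑' m, ENNReal.ofReal (⨍ t in P m, f t) * (P m).indicator (fun _ => 1) x

lemma ofReal_average_le_averagingOperator [MeasureSpace α] (f : α → ℝ) {m : ι} (hx : x ∈ P m) :
    ENNReal.ofReal (⨍ t in P m, f t) ≤ averagingOperator P f x := by
  simpa [averagingOperator, hx] using
    ENNReal.le_tsum (f := fun m => ENNReal.ofReal (⨍ t in P m, f t) *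
      (P m).indicator (fun _ => (1 : ℝ≥0∞)) x) m

lemma tsum_indicator_one_le_one_s4 {S : Set (Set α)} (hS : S.PairwiseDisjoint id) (x : α) :
    ∑' P : S, (P : Set α).indicator (fun _ => (1 : ℝ≥0∞)) x ≤ 1 := by
  by_cases hx : ∃ P : S, x ∈ (P : Set α)
  · obtain ⟨P, hP⟩ := hx
    have h_unique (Q : S) (hQ : Q ≠ P) : x ∉ (Q : Set α) := fun hxQ =>
      disjoint_left.1 (hS Q.2 P.2 (Subtype.coe_ne_coe.2 hQ)) hxQ hP
    rw [tsum_eq_single P fun Q hQ => indicator_of_notMem (h_unique Q hQ) _]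
    exact indicator_le_self _ _ x
  · rw [not_exists] at hx
    simp [hx]

lemma tsum_sigma_indicator_one_le_card {κ : Type*} {S : κ → Set (Set α)}
    (hS : ∀ k, (S k).PairwiseDisjoint id) (F : Finset κ) (hF : ∀ k, ∀ P ∈ S k, x ∈ P → k ∈ F) :
    ∑' q : Σ k, S k, (q.2 : Set α).indicator (fun _ => (1 : ℝ≥0∞)) x ≤ F.card := by
  rw [ENNReal.tsum_sigma fun k (P : S k) => (P : Set α).indicator (fun _ => (1 : ℝ≥0∞)) x]
  calc ∑' k, ∑' P : S k, (P : Set α).indicator (fun _ => (1 : ℝ≥0∞)) x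
      = ∑ k ∈ F, ∑' P : S k, (P : Set α).indicator (fun _ => (1 : ℝ≥0∞)) x :=
        tsum_eq_sum fun k hk => ENNReal.tsum_eq_zero.2 fun P =>
          indicator_of_notMem (fun hx => hk (hF k P P.2 hx)) _
    _ ≤ ∑ _ ∈ F, 1 := Finset.sum_le_sum fun k _ => tsum_indicator_one_le_one_s4 (hS k) x
    _ = F.card := by simp

end AveragingOperator

section DyadicBands

variable {n : ℕ} {u : (Fin n → ℝ) → ℝ} {S : (Σ _ : Fin n, ℤ) → Set (Set (Fin n → ℝ))}

lemma mem_Icc_log_two_of_mem_Ioo {v : ℝ} {k : ℤ} (hv : v ∈ Ioo ((2 : ℝ) ^ k / 4) (8 * 2 ^ k)) :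
    k ∈ Finset.Icc (Int.log 2 v - 2) (Int.log 2 v + 2) := by
  have hv0 : 0 < v := (by positivity : (0 : ℝ) < 2 ^ k / 4).trans hv.1
  have h_lower : k - 2 ≤ Int.log 2 v := by
    rw [← Int.zpow_le_iff_le_log one_lt_two hv0, Nat.cast_ofNat]
    calc (2 : ℝ) ^ (k - 2) = 2 ^ k / 4 := by
          rw [zpow_sub₀ two_ne_zero]
          norm_num
      _ ≤ v := hv.1.le
  have h_upper : Int.log 2 v < k + 3 := by
    rw [← Int.lt_zpow_iff_log_lt one_lt_two hv0, Nat.cast_ofNat]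
    calc v < 8 * 2 ^ k := hv.2
      _ = (2 : ℝ) ^ (k + 3) := by
          rw [zpow_add₀ two_ne_zero, mul_comm]
          norm_num
  rw [Finset.mem_Icc]
  omega

lemma mem_Icc_zpow_log_two {v : ℝ} (hv : 0 < v) :
    v ∈ Icc ((2 : ℝ) ^ Int.log 2 v) (2 * 2 ^ Int.log 2 v) := by
  constructor
  · exact_mod_cast Int.zpow_log_le_self one_lt_two hv
  · rw [mul_comm, ← zpow_add_one₀ two_ne_zero]
    exact_mod_cast (Int.lt_zpow_succ_log_self one_lt_two v).le

variable (hS : ∀ p, IsBandFamily u p.1 (2 ^ p.2) (S p))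
include hS

lemma tsum_indicator_le_of_isBandFamily (x : Fin n → ℝ) :
    ∑' q : Σ p, S p, (q.2 : Set (Fin n → ℝ)).indicator (fun _ => (1 : ℝ≥0∞)) x ≤ (n * 5 : ℕ) := by
  let F : Finset (Σ _ : Fin n, ℤ) := Finset.univ.sigma fun i =>
    Finset.Icc (Int.log 2 |pderiv1 n i u x| - 2) (Int.log 2 |pderiv1 n i u x| + 2)
  have hF : F.card = n * 5 := by
    have h_card (k : ℤ) : (Finset.Icc (k - 2) (k + 2)).card = 5 := by
      rw [Int.card_Icc]
      omega
    simp [F, h_card]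
  refine (tsum_sigma_indicator_one_le_card (fun p => (hS p).pairwiseDisjoint) F
    fun p P hP hx => ?_).trans_eq (congrArg _ hF)
  exact Finset.mem_sigma.2
    ⟨Finset.mem_univ _, mem_Icc_log_two_of_mem_Ioo ((hS p).abs_pderiv1_mem P hP x hx)⟩

lemma exists_mem_sq_grad1Abs_le {x : Fin n → ℝ} (hx : 0 < grad1Abs n u x) :
    ∃ q : Σ p, S p, x ∈ (q.2 : Set (Fin n → ℝ)) ∧
      grad1Abs n u x ^ 2 ≤
        256 * n ^ 2 * ((⨍ t in (q.2 : Set (Fin n → ℝ)), grad2Abs n u t) *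
          ⨍ t in (q.2 : Set (Fin n → ℝ)), |u t|) := by
  have : NeZero n := ⟨by rintro rfl; simp [grad1Abs] at hx⟩
  obtain ⟨i, hi⟩ := exists_grad1Abs_le_mul u x
  have hv : 0 < |pderiv1 n i u x| := pos_of_mul_pos_right (hx.trans_le hi) n.cast_nonneg
  have h_log := mem_Icc_zpow_log_two hv
  set r : ℝ := 2 ^ Int.log 2 |pderiv1 n i u x|
  obtain ⟨P, hPS, hxP⟩ := (hS ⟨i, Int.log 2 |pderiv1 n i u x|⟩).exists_mem x h_log
  refine ⟨⟨_, P, hPS⟩, hxP, ?_⟩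
  calc grad1Abs n u x ^ 2 ≤ (n * (2 * r)) ^ 2 := by
        gcongr
        exact hi.trans (by gcongr; exact h_log.2)
    _ = 4 * n ^ 2 * r ^ 2 := by ring
    _ ≤ 4 * n ^ 2 * (64 * ((⨍ t in P, grad2Abs n u t) * ⨍ t in P, |u t|)) := by
        gcongr
        exact (hS _).sq_le P hPS
    _ = 256 * n ^ 2 * ((⨍ t in P, grad2Abs n u t) * ⨍ t in P, |u t|) := by ring

lemma ofReal_sq_grad1Abs_le_of_isBandFamily (x : Fin n → ℝ) :
    ENNReal.ofReal (grad1Abs n u x ^ 2) ≤ ENNReal.ofReal (256 * n ^ 2) *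
      averagingOperator (fun q : Σ p, S p => (q.2 : Set (Fin n → ℝ))) (grad2Abs n u) x *
      averagingOperator (fun q : Σ p, S p => (q.2 : Set (Fin n → ℝ))) (fun t => |u t|) x := by
  have h_grad : 0 ≤ grad1Abs n u x := Finset.sum_nonneg fun i _ => abs_nonneg _
  obtain h0 | hpos := h_grad.eq_or_lt
  · rw [← h0]
    simp
  obtain ⟨q, hxq, hq⟩ := exists_mem_sq_grad1Abs_le hS hpos
  refine (ENNReal.ofReal_le_ofReal hq).trans ?_
  have h_nonneg : 0 ≤ ⨍ t in (q.2 : Set (Fin n → ℝ)), |u t| :=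
    integral_nonneg fun t => abs_nonneg _
  rw [ENNReal.ofReal_mul (by positivity), ENNReal.ofReal_mul' h_nonneg, ← mul_assoc]
  gcongr
  · exact ofReal_average_le_averagingOperator
      (P := fun q : Σ p, S p => (q.2 : Set (Fin n → ℝ))) (grad2Abs n u) hxq
  · exact ofReal_average_le_averagingOperator
      (P := fun q : Σ p, S p => (q.2 : Set (Fin n → ℝ))) (fun t => |u t|) hxq

end DyadicBands

theorem sparse_pointwise_estimate_gradient_general (n : ℕ) :
    ∃ C K : ℝ, 0 < C ∧ 0 < K ∧
      ∀ u : (Fin n → ℝ) → ℝ, ContDiff ℝ 2 u →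
        (∀ i, Tendsto (pderiv1 n i u) (cocompact _) (𝓝 0)) →
        ∃ (ι : Type) (_ : Countable ι) (P : ι → Set (Fin n → ℝ)),
          (∀ m, MeasurableSet (P m) ∧ 0 < volume (P m) ∧ volume (P m) < ⊤) ∧
          (∀ x, ENNReal.ofReal (grad1Abs n u x ^ 2) ≤ ENNReal.ofReal C *
            averagingOperator P (grad2Abs n u) x * averagingOperator P (fun t => |u t|) x) ∧
          (∀ x, ∑' m, (P m).indicator (fun _ => (1 : ℝ≥0∞)) x ≤ ENNReal.ofReal K) := by
  refine ⟨256 * n ^ 2 + 1, 5 * n + 1, by positivity, by positivity, fun u hu hu0 => ?_⟩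
  choose S hS using fun p : Σ _ : Fin n, ℤ =>
    exists_isBandFamily hu (hu0 p.1) (zpow_pos (two_pos : (0 : ℝ) < 2) p.2)
  have h_countable (p : Σ _ : Fin n, ℤ) : Countable (S p) := (hS p).countable
  refine ⟨Σ p, S p, inferInstance, fun q => q.2,
    fun q => ⟨(hS q.1).measurableSet q.2 q.2.2, (hS q.1).volume_pos q.2 q.2.2,
      (hS q.1).volume_lt_top q.2 q.2.2⟩, fun x => ?_, fun x => ?_⟩
  · refine (ofReal_sq_grad1Abs_le_of_isBandFamily hS x).trans ?_
    gcongr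
    exact le_add_of_nonneg_right zero_le_one
  · refine (tsum_indicator_le_of_isBandFamily hS x).trans ?_
    rw [← ENNReal.ofReal_natCast]
    refine ENNReal.ofReal_le_ofReal ?_
    push_cast
    linarith

/-- Sparse pointwise domination `|∇u|² ≤ C · T_𝒫|∇²u| · T_𝒫|u|` by a sparse
averaging operator with overlap at most `K`, for `u ∈ C²_c(ℝⁿ)`; the constants
`C` and `K` depend only on `n`. -/
theorem sparse_pointwise_estimate_gradient (n : ℕ) :
    ∃ C K : ℝ, 0 < C ∧ 0 < K ∧
      ∀ (u : (Fin n → ℝ) → ℝ), ContDiff ℝ 2 u → HasCompactSupport u →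
        ∃ (ι : Type) (_ : Countable ι) (P : ι → Set (Fin n → ℝ)),
          (∀ m, MeasurableSet (P m) ∧ 0 < volume (P m) ∧ volume (P m) < ⊤) ∧
          (∀ x, ENNReal.ofReal (grad1Abs n u x ^ 2) ≤
            ENNReal.ofReal C
              * (∑' m, ENNReal.ofReal (⨍ t in P m, grad2Abs n u t)
                  * (P m).indicator (fun _ => (1 : ℝ≥0∞)) x)
              * (∑' m, ENNReal.ofReal (⨍ t in P m, |u t|)
                  * (P m).indicator (fun _ => (1 : ℝ≥0∞)) x)) ∧
          (∀ x, ∑' m, (P m).indicator (fun _ => (1 : ℝ≥0∞)) x ≤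
            ENNReal.ofReal K) := by
  obtain ⟨C, K, hC, hK, h⟩ := sparse_pointwise_estimate_gradient_general n
  exact ⟨C, K, hC, hK, fun u hu hsupp =>
    h u hu fun i => (hsupp.fderiv_apply ℝ (Pi.single i 1)).is_zero_at_infty⟩
end
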